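/- There exist an angle θ₀ ∈ (0, π/2) and a radius r₀ > 0 such that for every complex q = 1/2 + r e^{iθ} with 0 < r < r₀ and θ₀ < θ < 2π - θ₀, the analytic continuation of PA satisfies PA(q) = D(q) - q² A(q) · ( (a(q);q)_∞ (v(q);q)_∞ / ((q;q)_∞ (a(q)v(q);q)_∞) ) · [ exp(-γ(q)·Log(1-2q)) · Π( Log(1-2q)/log(1/q) ) · U(q) + V(q) ], where Log denotes the principal branch of the logarithm and all series involved converge absolutely for such q. -/

import Mathlib

open Complex Filter Asymptotics Topology

noncomputable section

/-- finite q-Pochhammer symbol `(x;q)_n` -/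
def qPF (x q : ℂ) (n : ℕ) : ℂ := ∏ i ∈ Finset.range n, (1 - x * q ^ i)

/-- infinite q-Pochhammer symbol `(x;q)_∞` -/
def qPI (x q : ℂ) : ℂ := ∏' i : ℕ, (1 - x * q ^ i)

def uF (q : ℂ) : ℂ := q / (1 - q)
def vF (q : ℂ) : ℂ := (1 - q + q ^ 2) / (1 - q)
def aF (q : ℂ) : ℂ := q ^ 2 / (1 - q + q ^ 2)
def AF (q : ℂ) : ℂ := 2 * q * (1 - q) ^ 2 / (1 - 2 * q) ^ 2
def CF (q : ℂ) : ℂ := 2 * q * (3 - 10 * q + 9 * q ^ 2 - q ^ 3) / ((1 - q) * (1 - 2 * q) ^ 2)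
def DF (q : ℂ) : ℂ := CF q - (q ^ 2 / (1 - q) ^ 2) * AF q * qPI (vF q) q / qPI (aF q * vF q) q

/-- the `m`-th term (for `m ≥ 1`) of the explicit series for `PA(q)` -/
def PAterm (q : ℂ) (m : ℕ) : ℂ :=
  (-1) ^ m * q ^ (2 * m) / ((1 - 2 * q) ^ m * (1 - q - q ^ (m + 1))) *
    ∏ k ∈ Finset.Icc 1 (m - 1),
      ((1 - q - q ^ k + q ^ (k + 1) - q ^ (k + 2)) / (1 - q - q ^ (k + 1)))

/-- the explicit convergent series defining `PA(q)` for small `q` -/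
def PAseries (q : ℂ) : ℂ :=
  (-2 * q ^ 3 * (1 - q) ^ 2 / (1 - 2 * q) ^ 2) * (∑' m : ℕ, PAterm q (m + 1))
    + 2 * q * (3 - 10 * q + 9 * q ^ 2 - q ^ 3) / ((1 - 2 * q) ^ 2 * (1 - q))

/-- the slit disc `D₀ = {q : |q| < 55/100, q ∉ [1/2, 55/100]}` -/
def slitDisc : Set ℂ :=
  {q : ℂ | ‖q‖ < 55 / 100 ∧ ¬∃ x : ℝ, 1 / 2 ≤ x ∧ x ≤ 55 / 100 ∧ q = (x : ℂ)}

/-- `γ(q) = log v(q)/log(1/q)`, principal branches -/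
def gammaC (q : ℂ) : ℂ := Complex.log (vF q) / Complex.log (1 / q)

/-- the Fourier coefficient `p_k = π / sin(πγ(q) + 2ikπ²/log(1/q))` -/
def pcoefC (q : ℂ) (k : ℤ) : ℂ :=
  (Real.pi : ℂ) / Complex.sin ((Real.pi : ℂ) * gammaC q +
    2 * Complex.I * (k : ℂ) * (Real.pi : ℂ) ^ 2 / Complex.log (1 / q))

/-- the Fourier series `Π(w) = ∑_{k∈ℤ} p_k e^{-2πikw}` -/
def PiC (q : ℂ) (w : ℂ) : ℂ :=
  ∑' k : ℤ, pcoefC q k * Complex.exp (-2 * (Real.pi : ℂ) * Complex.I * (k : ℂ) * w)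

/-- the singular series `U(q) = (v(q) q^{3γ-2}/log(1/q))·(-q⁻¹t;q)_∞/(-a q⁻²t;q)_∞`,
`t = 1-2q`, principal powers -/
def UfunC (q : ℂ) : ℂ :=
  vF q * q ^ (3 * gammaC q - 2) / Complex.log (1 / q) *
    (qPI (-(q⁻¹ * (1 - 2 * q))) q / qPI (-(aF q * q⁻¹ ^ 2 * (1 - 2 * q))) q)

/-- the `r`-th term of the series in the regular series `V(q)` -/
def VtermC (q : ℂ) (r : ℕ) : ℂ :=
  (qPF ((aF q)⁻¹ * (vF q)⁻¹ * q) q r / qPF ((vF q)⁻¹ * q) q r) *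
    (-(aF q) * (1 - 2 * q) / q ^ 2) ^ r

/-- the regular series `V(q)` -/
def VfunC (q : ℂ) : ℂ :=
  -(qPI q q / qPI (aF q) q) * ((1 / q ^ 2) / (1 + (1 - 2 * q) / q ^ 2)) +
    (1 / q ^ 2) * (qPI q q * qPI (aF q * vF q) q / (qPI (aF q) q * qPI (vF q) q)) *
      ∑' r : ℕ, VtermC q r

/-! The `m`-th term of the series for `PA` is a quotient of finite `q`-Pochhammer symbols. Expanding
it by the `q`-binomial theorem and summing over `m` first gives an expression that is analytic off
the zeros of `1 - 2q + q^(n + 2)`, hence on the slit disc. Up to elementary factors it is the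
unilateral sum `∑_{n ≥ 0} (a;q)_n / (q;q)_n * (vq)^n / (q^n - y)` with `y = -t / q²`, `t = 1 - 2q`.

As a function of `y` this sum, the bilateral sum `∑_{n ∈ ℤ} (vq)^n / (q^n - y)` multiplied by
`(qy;q)_∞ / (ay;q)_∞`, and the regular series all satisfy first-order `q`-difference equations with
the same homogeneous part, so a suitable combination of them satisfies a homogeneous equation that
forces any nonzero solution to grow like `v^N` along `y, yq, yq², …`. The combination is bounded
there and `|v| > 1`, so it vanishes.

The bilateral sum is `∑_{n ∈ ℤ} K(w + n)`, where `K(ζ) = e^{βζ} / (1 + e^{Lζ})`, `β = log v`,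
`L = log (1/q)` and `w = log t / L`. Poisson summation turns it into `Π(w) / L`, because the
Fourier transform of `K` is given by the integral `∫ e^{sx} / (1 + e^x) dx = π / sin (π s)`. It
applies as long as `w + ℝ` stays inside the pole-free strip of `K`, which is what restricts `q` to
a sector. -/

/-! ### `q`-Pochhammer symbols and the `q`-binomial theorem -/

section QPochhammer

variable {x q : ℂ}

lemma one_sub_pow_succ_ne_zero (hq : ‖q‖ < 1) (n : ℕ) : 1 - q ^ (n + 1) ≠ 0 := by
  intro h
  have hlt : ‖q ^ (n + 1)‖ < 1 := by
    rw [norm_pow]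
    exact pow_lt_one₀ (norm_nonneg q) hq n.succ_ne_zero
  rw [← sub_eq_zero.mp h, norm_one] at hlt
  exact lt_irrefl _ hlt

lemma norm_mul_pow_lt_one (hx : ‖x‖ < 1) (hq : ‖q‖ < 1) (n : ℕ) : ‖x * q ^ n‖ < 1 := by
  rw [norm_mul, norm_pow]
  exact mul_lt_one_of_nonneg_of_lt_one_left (norm_nonneg x) hx
    (pow_le_one₀ (norm_nonneg q) hq.le)

lemma multipliable_one_sub_mul_pow (x : ℂ) (hq : ‖q‖ < 1) :
    Multipliable fun i : ℕ ↦ 1 - x * q ^ i := by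
  have hsum : Summable fun i : ℕ ↦ ‖-(x * q ^ i)‖ := by
    simp only [norm_neg, norm_mul, norm_pow]
    exact (summable_geometric_of_lt_one (norm_nonneg q) hq).mul_left _
  simpa only [sub_eq_add_neg] using multipliable_one_add_of_summable hsum

lemma tendsto_qPF_qPI (x : ℂ) (hq : ‖q‖ < 1) :
    Tendsto (qPF x q) atTop (𝓝 (qPI x q)) :=
  (multipliable_one_sub_mul_pow x hq).hasProd.tendsto_prod_nat

lemma qPF_zero (x q : ℂ) : qPF x q 0 = 1 := Finset.prod_range_zero _

lemma qPF_succ (x q : ℂ) (n : ℕ) : qPF x q (n + 1) = qPF x q n * (1 - x * q ^ n) :=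
  Finset.prod_range_succ _ n

lemma qPF_add (x q : ℂ) (m n : ℕ) : qPF x q (m + n) = qPF x q m * qPF (x * q ^ m) q n := by
  simp only [qPF, Finset.prod_range_add, pow_add, mul_assoc]

lemma qPI_eq_qPF_mul (x : ℂ) (hq : ‖q‖ < 1) (m : ℕ) :
    qPI x q = qPF x q m * qPI (x * q ^ m) q := by
  have hshift := (tendsto_add_atTop_iff_nat m).mpr (tendsto_qPF_qPI x hq)
  refine tendsto_nhds_unique hshift (((tendsto_qPF_qPI _ hq).const_mul _).congr fun n ↦ ?_)
  rw [← qPF_add, add_comm]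

lemma qPI_eq_one_sub_mul (x : ℂ) (hq : ‖q‖ < 1) : qPI x q = (1 - x) * qPI (x * q) q := by
  simpa [qPF] using qPI_eq_qPF_mul x hq 1

lemma qPI_zero_left (q : ℂ) : qPI 0 q = 1 := by simp [qPI]

end QPochhammer

section QBinomial

/-- The `n`-th term `∏_{i<n} (x - y q^i) / (1 - q^{i+1})` of the `q`-binomial series, in the
homogeneous form that also covers `x = 0`; for `x ≠ 0` it equals `(y/x;q)_n / (q;q)_n * x^n`. -/
def qBinomTerm (x y q : ℂ) (n : ℕ) : ℂ :=
  ∏ i ∈ Finset.range n, ((x - y * q ^ i) / (1 - q ^ (i + 1)))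

/-- The real majorant `∏_{i<n} (X + Y Q^i) / (1 - Q^{i+1})` of `qBinomTerm x y q n`, valid
simultaneously for all `‖x‖ ≤ X`, `‖y‖ ≤ Y` and `‖q‖ ≤ Q < 1`. -/
def qBinomBound (X Y Q : ℝ) (n : ℕ) : ℝ :=
  ∏ i ∈ Finset.range n, ((X + Y * Q ^ i) / (1 - Q ^ (i + 1)))

lemma qBinomBound_pos {X Y Q : ℝ} (hX : 0 < X) (hY : 0 ≤ Y) (hQ : 0 ≤ Q) (hQ1 : Q < 1) (n : ℕ) :
    0 < qBinomBound X Y Q n :=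
  Finset.prod_pos fun i _ ↦
    div_pos (by positivity) (sub_pos.mpr (pow_lt_one₀ hQ hQ1 i.succ_ne_zero))

lemma summable_qBinomBound {X Y Q : ℝ} (hX : 0 < X) (hX1 : X < 1) (hY : 0 ≤ Y) (hQ : 0 ≤ Q)
    (hQ1 : Q < 1) : Summable (qBinomBound X Y Q) := by
  have hpos := qBinomBound_pos hX hY hQ hQ1
  refine summable_of_ratio_test_tendsto_lt_one hX1 (.of_forall fun n ↦ (hpos n).ne') ?_
  have hpow : Tendsto (fun n : ℕ ↦ Q ^ n) atTop (𝓝 0) :=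
    tendsto_pow_atTop_nhds_zero_of_lt_one hQ hQ1
  have hratio : Tendsto (fun n : ℕ ↦ (X + Y * Q ^ n) / (1 - Q ^ (n + 1))) atTop (𝓝 X) := by
    simpa [Pi.div_def] using ((hpow.const_mul Y).const_add X).div
      (((tendsto_add_atTop_iff_nat 1).mpr hpow).const_sub 1) (by norm_num)
  refine hratio.congr fun n ↦ ?_
  rw [Real.norm_of_nonneg (hpos _).le, Real.norm_of_nonneg (hpos _).le, eq_div_iff (hpos n).ne',
    mul_comm]
  exact (Finset.prod_range_succ _ n).symm

lemma norm_qBinomTerm_le {x y q : ℂ} {X Y Q : ℝ} (hx : ‖x‖ ≤ X) (hy : ‖y‖ ≤ Y) (hq : ‖q‖ ≤ Q)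
    (hQ1 : Q < 1) (n : ℕ) : ‖qBinomTerm x y q n‖ ≤ qBinomBound X Y Q n := by
  have hX : 0 ≤ X := (norm_nonneg x).trans hx
  have hY : 0 ≤ Y := (norm_nonneg y).trans hy
  have hQ : 0 ≤ Q := (norm_nonneg q).trans hq
  rw [qBinomTerm, qBinomBound, norm_prod]
  refine Finset.prod_le_prod (fun _ _ ↦ norm_nonneg _) fun i _ ↦ ?_
  have hnum : ‖x - y * q ^ i‖ ≤ X + Y * Q ^ i := by
    refine (norm_sub_le _ _).trans ?_
    rw [norm_mul, norm_pow]
    gcongr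
  have hden : 1 - Q ^ (i + 1) ≤ ‖1 - q ^ (i + 1)‖ := by
    have htri := norm_sub_norm_le 1 (q ^ (i + 1))
    rw [norm_one, norm_pow] at htri
    have hmono : ‖q‖ ^ (i + 1) ≤ Q ^ (i + 1) := by gcongr
    linarith
  rw [norm_div]
  exact div_le_div₀ (by positivity) hnum (sub_pos.mpr (pow_lt_one₀ hQ hQ1 i.succ_ne_zero)) hden

lemma qBinomTerm_zero (x y q : ℂ) : qBinomTerm x y q 0 = 1 := Finset.prod_range_zero _

lemma qBinomTerm_mul_mul (x y q s : ℂ) (n : ℕ) :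
    qBinomTerm (x * s) (y * s) q n = qBinomTerm x y q n * s ^ n := by
  induction n with
  | zero => simp [qBinomTerm_zero]
  | succ n ih =>
    simp only [qBinomTerm, Finset.prod_range_succ] at ih ⊢
    rw [ih]
    ring

variable {x q : ℂ}

lemma qBinomTerm_succ (x y : ℂ) (hq : ‖q‖ < 1) (n : ℕ) :
    (1 - q ^ (n + 1)) * qBinomTerm x y q (n + 1) = (x - y * q ^ n) * qBinomTerm x y q n := by
  have hne := one_sub_pow_succ_ne_zero hq n
  simp only [qBinomTerm, Finset.prod_range_succ]
  field_simp

lemma qBinomTerm_one_left (y q : ℂ) (n : ℕ) : qBinomTerm 1 y q n = qPF y q n / qPF q q n := by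
  simp only [qBinomTerm, qPF, Finset.prod_div_distrib, pow_succ']

lemma summable_norm_qBinomTerm (y : ℂ) (hx : ‖x‖ < 1) (hq : ‖q‖ < 1) :
    Summable fun n ↦ ‖qBinomTerm x y q n‖ := by
  obtain ⟨X, hX, hX1⟩ := exists_between hx
  exact .of_nonneg_of_le (fun _ ↦ norm_nonneg _) (norm_qBinomTerm_le hX.le le_rfl le_rfl hq)
    (summable_qBinomBound ((norm_nonneg x).trans_lt hX) hX1 (norm_nonneg y) (norm_nonneg q) hq)

lemma one_sub_mul_tsum_qBinomTerm (y : ℂ) (hx : ‖x‖ < 1) (hq : ‖q‖ < 1) :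
    (1 - x) * ∑' n, qBinomTerm x y q n = (1 - y) * ∑' n, qBinomTerm (x * q) (y * q) q n := by
  have hs := (summable_norm_qBinomTerm y hx hq).of_norm
  have hxq : ‖x * q‖ < 1 := by simpa using norm_mul_pow_lt_one hx hq 1
  have hsq := (summable_norm_qBinomTerm (y * q) hxq hq).of_norm
  have hdiff : ∑' n, qBinomTerm x y q n - ∑' n, qBinomTerm (x * q) (y * q) q n
      = ∑' n, (x - y * q ^ n) * qBinomTerm x y q n := by
    rw [← hs.tsum_sub hsq, (hs.sub hsq).tsum_eq_zero_add]
    simp only [qBinomTerm_zero, sub_self, zero_add]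
    refine tsum_congr fun n ↦ ?_
    rw [← qBinomTerm_succ x y hq n, qBinomTerm_mul_mul]
    ring
  have hlin : ∑' n, (x - y * q ^ n) * qBinomTerm x y q n
      = x * ∑' n, qBinomTerm x y q n - y * ∑' n, qBinomTerm (x * q) (y * q) q n := by
    rw [← tsum_mul_left, ← tsum_mul_left, ← (hs.mul_left x).tsum_sub (hsq.mul_left y)]
    refine tsum_congr fun n ↦ ?_
    rw [qBinomTerm_mul_mul]
    ring
  linear_combination hdiff + hlin

lemma qPF_mul_tsum_qBinomTerm (y : ℂ) (hx : ‖x‖ < 1) (hq : ‖q‖ < 1) (N : ℕ) :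
    qPF x q N * ∑' n, qBinomTerm x y q n
      = qPF y q N * ∑' n, qBinomTerm (x * q ^ N) (y * q ^ N) q n := by
  induction N with
  | zero => simp [qPF_zero]
  | succ N ih =>
    have hstep := one_sub_mul_tsum_qBinomTerm (y * q ^ N) (norm_mul_pow_lt_one hx hq N) hq
    rw [qPF_succ, qPF_succ, pow_succ, ← mul_assoc, ← mul_assoc]
    linear_combination (1 - x * q ^ N) * ih + qPF y q N * hstep

lemma tendsto_tsum_qBinomTerm_mul_pow (y : ℂ) (hx : ‖x‖ < 1) (hq : ‖q‖ < 1) :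
    Tendsto (fun N : ℕ ↦ ∑' n, qBinomTerm (x * q ^ N) (y * q ^ N) q n) atTop (𝓝 1) := by
  have hpoint (n : ℕ) : Tendsto (fun N : ℕ ↦ qBinomTerm (x * q ^ N) (y * q ^ N) q n) atTop
      (𝓝 (if n = 0 then 1 else 0)) := by
    simp only [qBinomTerm_mul_mul]
    rcases eq_or_ne n 0 with rfl | hn
    · simp [qBinomTerm_zero]
    · have hpow : Tendsto (fun N : ℕ ↦ (q ^ N) ^ n) atTop (𝓝 (0 ^ n)) :=
        (tendsto_pow_atTop_nhds_zero_of_norm_lt_one hq).pow n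
      simpa [hn] using hpow.const_mul (qBinomTerm x y q n)
  have hbound (N n : ℕ) : ‖qBinomTerm (x * q ^ N) (y * q ^ N) q n‖ ≤ ‖qBinomTerm x y q n‖ := by
    rw [qBinomTerm_mul_mul, norm_mul, norm_pow, norm_pow]
    exact mul_le_of_le_one_right (norm_nonneg _)
      (pow_le_one₀ (by positivity) (pow_le_one₀ (norm_nonneg q) hq.le))
  simpa using tendsto_tsum_of_dominated_convergence (summable_norm_qBinomTerm y hx hq) hpoint
    (.of_forall hbound)

lemma qPI_mul_tsum_qBinomTerm (y : ℂ) (hx : ‖x‖ < 1) (hq : ‖q‖ < 1) :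
    qPI x q * ∑' n, qBinomTerm x y q n = qPI y q := by
  have hleft := (tendsto_qPF_qPI x hq).mul_const (∑' n, qBinomTerm x y q n)
  have hright := (tendsto_qPF_qPI y hq).mul (tendsto_tsum_qBinomTerm_mul_pow y hx hq)
  rw [mul_one] at hright
  exact tendsto_nhds_unique hleft
    (hright.congr fun N ↦ (qPF_mul_tsum_qBinomTerm y hx hq N).symm)

lemma qPI_ne_zero (hx : ‖x‖ < 1) (hq : ‖q‖ < 1) : qPI x q ≠ 0 := by
  refine left_ne_zero_of_mul (b := ∑' n, qBinomTerm x 0 q n) ?_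
  rw [qPI_mul_tsum_qBinomTerm 0 hx hq, qPI_zero_left]
  exact one_ne_zero

theorem tsum_qBinomTerm (y : ℂ) (hx : ‖x‖ < 1) (hq : ‖q‖ < 1) :
    ∑' n, qBinomTerm x y q n = qPI y q / qPI x q := by
  rw [eq_div_iff (qPI_ne_zero hx hq), mul_comm, qPI_mul_tsum_qBinomTerm y hx hq]

end QBinomial

/-! ### Analytic continuation to the slit disc -/

section SlitDisc

lemma add_one_mul_pow_lt_two {ρ : ℝ} (hρ0 : 0 ≤ ρ) (hρ : ρ ≤ 2 / 3) (n : ℕ) :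
    (n + 1) * ρ ^ n < 2 := by
  have hbern : 1 + n * (1 / 2 : ℝ) ≤ (1 + 1 / 2) ^ n := one_add_mul_le_pow (by norm_num) n
  calc (n + 1) * ρ ^ n ≤ (n + 1) * (2 / 3) ^ n := by gcongr
    _ < 2 * ((1 + 1 / 2) ^ n * (2 / 3) ^ n) := by
      have : (0 : ℝ) < (2 / 3) ^ n := by positivity
      nlinarith
    _ = 2 := by rw [← mul_pow]; norm_num

/-- Subtracting the conjugate equation and dividing by `q - conj q` would make a sum of `n + 1`
products of size `‖q‖ ^ n` equal to `2`. -/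
lemma conj_eq_self_of_one_sub_two_mul_add_pow_eq_zero {q : ℂ} {n : ℕ} (hq : ‖q‖ ≤ 2 / 3)
    (hroot : 1 - 2 * q + q ^ (n + 1) = 0) : starRingEnd ℂ q = q := by
  set c := starRingEnd ℂ q with hc
  have hroot' : 1 - 2 * c + c ^ (n + 1) = 0 := by
    simpa only [map_add, map_sub, map_mul, map_pow, map_one, map_zero, Complex.conj_ofNat]
      using congrArg (starRingEnd ℂ) hroot
  by_contra hne
  have hsum : ∑ i ∈ Finset.range (n + 1), q ^ i * c ^ (n - i) = 2 := by
    apply mul_right_cancel₀ (sub_ne_zero.mpr (Ne.symm hne))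
    refine ((Commute.all q c).geom_sum₂_mul (n + 1)).trans ?_
    linear_combination hroot - hroot'
  have hle : ‖∑ i ∈ Finset.range (n + 1), q ^ i * c ^ (n - i)‖ ≤ (n + 1) * ‖q‖ ^ n := by
    refine (norm_sum_le_of_le _ fun i hi ↦ (?_ : _ ≤ ‖q‖ ^ n)).trans (by simp)
    rw [norm_mul, norm_pow, norm_pow, hc, Complex.norm_conj, ← pow_add,
      Nat.add_sub_cancel' (Finset.mem_range_succ_iff.mp hi)]
  rw [hsum, Complex.norm_ofNat] at hle
  exact absurd (add_one_mul_pow_lt_two (norm_nonneg q) hq n) (not_lt.mpr hle)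

lemma one_sub_two_mul_add_pow_ne_zero {q : ℂ} (hq : q ∈ slitDisc) (n : ℕ) :
    1 - 2 * q + q ^ (n + 2) ≠ 0 := by
  intro hroot
  obtain ⟨x, rfl⟩ := Complex.conj_eq_iff_real.mp
    (conj_eq_self_of_one_sub_two_mul_add_pow_eq_zero (hq.1.le.trans (by norm_num)) hroot)
  have hx : |x| < 55 / 100 := by simpa using hq.1
  have hreal : 1 - 2 * x + x ^ (n + 2) = 0 := by exact_mod_cast hroot
  have hpow : |x ^ (n + 2)| < 1 := by
    rw [abs_pow]
    exact pow_lt_one₀ (abs_nonneg x) (by linarith) (by omega)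
  have hx0 : 0 < x := by linarith [(abs_lt.mp hpow).1]
  have hpow0 : 0 < x ^ (n + 2) := by positivity
  exact hq.2 ⟨x, by linarith, (le_abs_self x).trans hx.le, rfl⟩

lemma one_sub_two_mul_ne_zero_of_mem_slitDisc {q : ℂ} (hq : q ∈ slitDisc) : 1 - 2 * q ≠ 0 := by
  intro h
  refine hq.2 ⟨1 / 2, le_rfl, by norm_num, ?_⟩
  push_cast
  linear_combination -h / 2

lemma isOpen_slitDisc : IsOpen slitDisc := by
  have heq : slitDisc = Metric.ball (0 : ℂ) (55 / 100) ∩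
      ((fun x : ℝ ↦ (x : ℂ)) '' Set.Icc (1 / 2) (55 / 100))ᶜ := by
    ext q
    simp [slitDisc, and_assoc, eq_comm]
  rw [heq]
  exact Metric.isOpen_ball.inter
    (isCompact_Icc.image Complex.continuous_ofReal).isClosed.isOpen_compl

lemma mem_slitDisc_of_norm_lt {q : ℂ} (hq : ‖q‖ < 1 / 2) : q ∈ slitDisc := by
  refine ⟨hq.trans (by norm_num), ?_⟩
  rintro ⟨x, hx, -, rfl⟩
  rw [norm_real, Real.norm_eq_abs] at hq
  linarith [le_abs_self x]

end SlitDisc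

section Continuation

/-- The explicit analytic continuation of `PAseries` to `slitDisc`, obtained by expanding the
`m`-th term of the series by the `q`-binomial theorem and summing over `m` first. -/
def PAcont (q : ℂ) : ℂ :=
  CF q + q ^ 4 * AF q / (1 - q) * (∑' n, qBinomTerm (uF q * q) (vF q * q) q n) *
    ∑' n, qBinomTerm (vF q * q) (uF q * q ^ 2) q n * (1 / (1 - 2 * q + q ^ (n + 2)))

lemma one_sub_ne_zero_of_norm_lt_one {q : ℂ} (hq : ‖q‖ < 1) : 1 - q ≠ 0 := by
  simpa using one_sub_pow_succ_ne_zero hq 0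

lemma norm_uF_mul_le {q : ℂ} (hq : ‖q‖ ≤ 55 / 100) : ‖uF q * q‖ ≤ 68 / 100 := by
  have hsub : 45 / 100 ≤ ‖1 - q‖ := by
    have htri := norm_sub_norm_le 1 q
    rw [norm_one] at htri
    linarith
  rw [uF, norm_mul, norm_div]
  calc ‖q‖ / ‖1 - q‖ * ‖q‖ ≤ (55 / 100) / (45 / 100) * (55 / 100) := by gcongr
    _ ≤ 68 / 100 := by norm_num

lemma vF_eq_one_add {q : ℂ} (hq : 1 - q ≠ 0) : vF q = 1 + uF q * q := by
  rw [vF, uF]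
  field_simp

lemma norm_vF_mul_le {q : ℂ} (hq : ‖q‖ ≤ 55 / 100) : ‖vF q * q‖ ≤ 93 / 100 := by
  have hv : ‖vF q‖ ≤ 1 + 68 / 100 := by
    rw [vF_eq_one_add (one_sub_ne_zero_of_norm_lt_one (hq.trans_lt (by norm_num)))]
    refine (norm_add_le _ _).trans ?_
    rw [norm_one]
    gcongr
    exact norm_uF_mul_le hq
  rw [norm_mul]
  calc ‖vF q‖ * ‖q‖ ≤ (1 + 68 / 100) * (55 / 100) := by gcongr
    _ ≤ 93 / 100 := by norm_num

lemma norm_uF_mul_sq_le {q : ℂ} (hq : ‖q‖ ≤ 55 / 100) : ‖uF q * q ^ 2‖ ≤ 1 := by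
  rw [pow_two, ← mul_assoc, norm_mul]
  exact mul_le_one₀ ((norm_uF_mul_le hq).trans (by norm_num)) (norm_nonneg q)
    (hq.trans (by norm_num))

lemma differentiableAt_uF {q : ℂ} (hq : 1 - q ≠ 0) : DifferentiableAt ℂ uF q := by
  unfold uF
  fun_prop (disch := assumption)

lemma differentiableAt_vF {q : ℂ} (hq : 1 - q ≠ 0) : DifferentiableAt ℂ vF q := by
  unfold vF
  fun_prop (disch := assumption)

lemma differentiableAt_qBinomTerm {x y : ℂ → ℂ} {q : ℂ} (hq : ‖q‖ < 1)
    (hx : DifferentiableAt ℂ x q) (hy : DifferentiableAt ℂ y q) (n : ℕ) :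
    DifferentiableAt ℂ (fun q ↦ qBinomTerm (x q) (y q) q n) q := by
  unfold qBinomTerm
  refine DifferentiableAt.fun_finsetProd fun i _ ↦ ?_
  have hne := one_sub_pow_succ_ne_zero hq i
  fun_prop (disch := assumption)

lemma exists_pos_eventually_forall_le {X : Type*} [TopologicalSpace X] {x₀ : X} {f : ℕ → X → ℝ}
    (hcont : ∀ n, ContinuousAt (f n) x₀) (hpos : ∀ n, 0 < f n x₀) (N : ℕ)
    (htail : ∃ c > 0, ∀ᶠ x in 𝓝 x₀, ∀ n ≥ N, c ≤ f n x) :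
    ∃ c > 0, ∀ᶠ x in 𝓝 x₀, ∀ n, c ≤ f n x := by
  induction N with
  | zero => simpa using htail
  | succ N ih =>
    obtain ⟨c, hc, hev⟩ := htail
    refine ih ⟨min c (f N x₀ / 2), lt_min hc (half_pos (hpos N)), ?_⟩
    filter_upwards [hev, (hcont N).eventually (lt_mem_nhds (half_lt_self (hpos N)))]
      with x hx hxN n hn
    rcases hn.eq_or_lt with rfl | hlt
    · exact (min_le_right _ _).trans hxN.le
    · exact (min_le_left _ _).trans (hx n hlt)

lemma exists_pos_eventually_forall_le_norm_one_sub_two_mul_add_pow {q₀ : ℂ} (hq₀ : q₀ ∈ slitDisc) :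
    ∃ c > 0, ∀ᶠ q in 𝓝 q₀, ∀ n : ℕ, c ≤ ‖1 - 2 * q + q ^ (n + 2)‖ := by
  have hδ : 0 < ‖1 - 2 * q₀‖ := norm_pos_iff.mpr (one_sub_two_mul_ne_zero_of_mem_slitDisc hq₀)
  obtain ⟨N, hN⟩ := exists_pow_lt_of_lt_one (show 0 < ‖1 - 2 * q₀‖ / 4 by positivity)
    (show (55 / 100 : ℝ) < 1 by norm_num)
  refine exists_pos_eventually_forall_le (fun n ↦ by fun_prop)
    (fun n ↦ norm_pos_iff.mpr (one_sub_two_mul_add_pow_ne_zero hq₀ n)) N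
    ⟨‖1 - 2 * q₀‖ / 4, by positivity, ?_⟩
  have hcont : ContinuousAt (fun q : ℂ ↦ ‖1 - 2 * q‖) q₀ := by fun_prop
  filter_upwards [hcont.eventually (lt_mem_nhds (half_lt_self hδ)), isOpen_slitDisc.mem_nhds hq₀]
    with q hq hslit n hn
  have hpow : ‖q ^ (n + 2)‖ ≤ (55 / 100) ^ N := by
    rw [norm_pow]
    calc ‖q‖ ^ (n + 2) ≤ (55 / 100) ^ (n + 2) := by gcongr; exact hslit.1.le
      _ ≤ (55 / 100) ^ N := pow_le_pow_of_le_one (by norm_num) (by norm_num) (by omega)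
  have htri := norm_sub_norm_le (1 - 2 * q) (-(q ^ (n + 2)))
  rw [norm_neg, sub_neg_eq_add] at htri
  linarith

lemma analyticOnNhd_tsum_qBinomTerm :
    AnalyticOnNhd ℂ (fun q ↦ ∑' n, qBinomTerm (uF q * q) (vF q * q) q n) slitDisc := by
  refine (differentiableOn_tsum_of_summable_norm (summable_qBinomBound (X := 68 / 100)
    (Y := 93 / 100) (Q := 55 / 100) (by norm_num) (by norm_num) (by norm_num) (by norm_num)
    (by norm_num)) (fun n q hq ↦ ?_) isOpen_slitDisc (fun n q hq ↦ ?_)).analyticOnNhd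
    isOpen_slitDisc
  · have hq1 : ‖q‖ < 1 := hq.1.trans (by norm_num)
    have hne := one_sub_ne_zero_of_norm_lt_one hq1
    exact (differentiableAt_qBinomTerm hq1 ((differentiableAt_uF hne).mul differentiableAt_fun_id)
      ((differentiableAt_vF hne).mul differentiableAt_fun_id) n).differentiableWithinAt
  · exact norm_qBinomTerm_le (norm_uF_mul_le hq.1.le) (norm_vF_mul_le hq.1.le) hq.1.le
      (by norm_num) n

lemma analyticOnNhd_tsum_qBinomTerm_div :
    AnalyticOnNhd ℂ (fun q ↦ ∑' n, qBinomTerm (vF q * q) (uF q * q ^ 2) q n *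
      (1 / (1 - 2 * q + q ^ (n + 2)))) slitDisc := by
  intro q₀ hq₀
  obtain ⟨c, hc, hev⟩ := exists_pos_eventually_forall_le_norm_one_sub_two_mul_add_pow hq₀
  obtain ⟨s, hs, hso, hq₀s⟩ := eventually_nhds_iff.mp
    (hev.and (isOpen_slitDisc.eventually_mem hq₀))
  refine (differentiableOn_tsum_of_summable_norm ((summable_qBinomBound (X := 93 / 100)
    (Y := 1) (Q := 55 / 100) (by norm_num) (by norm_num) (by norm_num) (by norm_num)
    (by norm_num)).mul_right (1 / c)) (fun n q hq ↦ ?_) hso (fun n q hq ↦ ?_)).analyticAt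
    (hso.mem_nhds hq₀s)
  · have hslit := (hs q hq).2
    have hq1 : ‖q‖ < 1 := hslit.1.trans (by norm_num)
    have hne := one_sub_ne_zero_of_norm_lt_one hq1
    have hden := one_sub_two_mul_add_pow_ne_zero hslit n
    refine ((differentiableAt_qBinomTerm hq1 ((differentiableAt_vF hne).mul differentiableAt_fun_id)
      ((differentiableAt_uF hne).mul (differentiableAt_fun_id.pow 2)) n).mul
      ?_).differentiableWithinAt
    fun_prop (disch := assumption)
  · obtain ⟨hden, hslit⟩ := hs q hq
    have hterm := norm_qBinomTerm_le (norm_vF_mul_le hslit.1.le) (norm_uF_mul_sq_le hslit.1.le)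
      hslit.1.le (by norm_num) n
    rw [norm_mul, norm_div, norm_one]
    exact mul_le_mul hterm (one_div_le_one_div_of_le hc (hden n)) (by positivity)
      ((norm_nonneg _).trans hterm)

lemma analyticOnNhd_PAcont : AnalyticOnNhd ℂ PAcont slitDisc := by
  intro q hq
  have h1 := one_sub_ne_zero_of_norm_lt_one (q := q) (hq.1.trans (by norm_num))
  have h2 : (1 - 2 * q) ^ 2 ≠ 0 := pow_ne_zero 2 (one_sub_two_mul_ne_zero_of_mem_slitDisc hq)
  have h3 : (1 - q) * (1 - 2 * q) ^ 2 ≠ 0 := mul_ne_zero h1 h2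
  have hC : AnalyticAt ℂ CF q := by
    unfold CF
    fun_prop (disch := assumption)
  have hA : AnalyticAt ℂ (fun q ↦ q ^ 4 * AF q / (1 - q)) q := by
    unfold AF
    fun_prop (disch := assumption)
  exact hC.add ((hA.mul (analyticOnNhd_tsum_qBinomTerm q hq)).mul
    (analyticOnNhd_tsum_qBinomTerm_div q hq))

lemma PAterm_succ_eq_qPF_div_qPF {q : ℂ} (hq : 1 - q ≠ 0) (m : ℕ) :
    PAterm q (m + 1) = (-(q ^ 2) / (1 - 2 * q)) ^ (m + 1) * (1 / (1 - q)) *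
      (qPF (vF q * q) q m / qPF (uF q * q) q (m + 1)) := by
  have hu (i : ℕ) : 1 - uF q * q * q ^ i = (1 - q - q ^ (i + 2)) / (1 - q) := by
    rw [uF]
    field_simp
    ring
  have hv (i : ℕ) : 1 - vF q * q * q ^ i
      = (1 - q - q ^ (i + 1) + q ^ (i + 2) - q ^ (i + 3)) / (1 - q) := by
    rw [vF]
    field_simp
    ring
  have hprod : ∏ k ∈ Finset.Icc 1 (m + 1 - 1),
      ((1 - q - q ^ k + q ^ (k + 1) - q ^ (k + 2)) / (1 - q - q ^ (k + 1)))
      = qPF (vF q * q) q m / qPF (uF q * q) q m := by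
    rw [Nat.add_sub_cancel, qPF, qPF, ← Finset.prod_div_distrib, ← Finset.Ico_add_one_right_eq_Icc,
      Finset.prod_Ico_eq_prod_range]
    refine Finset.prod_congr rfl fun i _ ↦ ?_
    rw [hu, hv, div_div_div_cancel_right₀ hq, add_comm 1 i]
  rw [PAterm, hprod, qPF_succ, hu, div_pow, neg_pow (q ^ 2), ← pow_mul]
  field_simp

lemma qPF_div_qPF_succ_eq_tsum_mul_tsum {x y q : ℂ} (hx : ‖x‖ < 1) (hy : ‖y‖ < 1) (hq : ‖q‖ < 1)
    (m : ℕ) :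
    qPF y q m / qPF x q (m + 1) = (∑' n, qBinomTerm x y q n) *
      ∑' n, qBinomTerm y (x * q) q n * (q ^ m) ^ n := by
  have hym := norm_mul_pow_lt_one hy hq m
  have hy_ne := qPI_ne_zero hym hq
  have hx_ne := qPI_ne_zero (norm_mul_pow_lt_one hx hq (m + 1)) hq
  have hxF_ne : qPF x q (m + 1) ≠ 0 := by
    refine left_ne_zero_of_mul (b := qPI (x * q ^ (m + 1)) q) ?_
    rw [← qPI_eq_qPF_mul x hq]
    exact qPI_ne_zero hx hq
  simp only [← qBinomTerm_mul_mul]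
  rw [tsum_qBinomTerm _ hx hq, tsum_qBinomTerm _ hym hq, qPI_eq_qPF_mul y hq m,
    qPI_eq_qPF_mul x hq (m + 1), mul_assoc x q, ← pow_succ']
  field_simp

lemma tsum_pow_mul_tsum_mul_pow_pow {z q : ℂ} {c : ℕ → ℂ} (hz : ‖z‖ < 1) (hq : ‖q‖ ≤ 1)
    (hc : Summable fun n ↦ ‖c n‖) :
    ∑' m : ℕ, z ^ m * ∑' n, c n * (q ^ m) ^ n = ∑' n, c n * (1 / (1 - z * q ^ n)) := by
  have hdouble : Summable fun p : ℕ × ℕ ↦ z ^ p.1 * (c p.2 * (q ^ p.1) ^ p.2) := by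
    refine .of_norm_bounded ((summable_geometric_of_lt_one (norm_nonneg z) hz).mul_of_nonneg hc
      (fun _ ↦ by positivity) fun _ ↦ norm_nonneg _) fun p ↦ ?_
    rw [norm_mul, norm_mul, norm_pow]
    refine mul_le_mul_of_nonneg_left (mul_le_of_le_one_right (norm_nonneg _) ?_) (by positivity)
    rw [norm_pow, norm_pow]
    exact pow_le_one₀ (by positivity) (pow_le_one₀ (norm_nonneg q) hq)
  simp only [← tsum_mul_left]
  rw [← hdouble.tsum_comm' (f := fun m n : ℕ ↦ z ^ m * (c n * (q ^ m) ^ n))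
    (fun m ↦ hdouble.prod_factor m) (fun n ↦ hdouble.prod_symm.prod_factor n)]
  refine tsum_congr fun n ↦ ?_
  have hzq : ‖z * q ^ n‖ < 1 := by
    rw [norm_mul, norm_pow]
    exact mul_lt_one_of_nonneg_of_lt_one_left (norm_nonneg z) hz
      (pow_le_one₀ (norm_nonneg q) hq)
  rw [one_div, ← tsum_geometric_of_norm_lt_one hzq, ← tsum_mul_left]
  exact tsum_congr fun m ↦ by ring

lemma tsum_PAterm_succ {q : ℂ} (hq : q ∈ slitDisc) (hq2 : ‖q‖ ^ 2 < ‖1 - 2 * q‖) :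
    ∑' m : ℕ, PAterm q (m + 1) = -(q ^ 2) / (1 - q) * (∑' n, qBinomTerm (uF q * q) (vF q * q) q n) *
      ∑' n, qBinomTerm (vF q * q) (uF q * q ^ 2) q n * (1 / (1 - 2 * q + q ^ (n + 2))) := by
  have hq1 : ‖q‖ < 1 := hq.1.trans (by norm_num)
  have hne := one_sub_ne_zero_of_norm_lt_one hq1
  have ht := one_sub_two_mul_ne_zero_of_mem_slitDisc hq
  have hu : ‖uF q * q‖ < 1 := (norm_uF_mul_le hq.1.le).trans_lt (by norm_num)
  have hv : ‖vF q * q‖ < 1 := (norm_vF_mul_le hq.1.le).trans_lt (by norm_num)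
  set z := -(q ^ 2) / (1 - 2 * q) with hz
  have hz_mul : z * (1 - 2 * q) = -(q ^ 2) := div_mul_cancel₀ _ ht
  have hz1 : ‖z‖ < 1 := by
    rw [hz, norm_div, norm_neg, norm_pow]
    exact (div_lt_one ((sq_nonneg _).trans_lt hq2)).mpr hq2
  have hterm (m : ℕ) : PAterm q (m + 1) = z / (1 - q) *
      (∑' n, qBinomTerm (uF q * q) (vF q * q) q n) *
      (z ^ m * ∑' n, qBinomTerm (vF q * q) (uF q * q * q) q n * (q ^ m) ^ n) := by
    rw [PAterm_succ_eq_qPF_div_qPF hne, qPF_div_qPF_succ_eq_tsum_mul_tsum hu hv hq1]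
    ring
  have hgeom (n : ℕ) : 1 / (1 - z * q ^ n)
      = (1 - 2 * q) * (1 / (1 - 2 * q + q ^ (n + 2))) := by
    have hden : 1 - z * q ^ n = (1 - 2 * q + q ^ (n + 2)) / (1 - 2 * q) := by
      rw [eq_div_iff ht]
      linear_combination -q ^ n * hz_mul
    rw [hden, one_div_div, mul_one_div]
  simp only [hterm]
  rw [tsum_mul_left, tsum_pow_mul_tsum_mul_pow_pow hz1 hq1.le (summable_norm_qBinomTerm _ hv hq1)]
  simp only [hgeom, mul_left_comm _ (1 - 2 * q), mul_assoc (uF q), ← pow_two]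
  rw [tsum_mul_left, ← hz_mul]
  ring

lemma PAcont_eq_PAseries {q : ℂ} (hq : q ∈ slitDisc) (hq2 : ‖q‖ ^ 2 < ‖1 - 2 * q‖) :
    PAcont q = PAseries q := by
  rw [PAcont, PAseries, tsum_PAterm_succ hq hq2, CF, AF]
  ring

lemma PAcont_eq_PAseries_of_norm_lt {q : ℂ} (hq : ‖q‖ < 1 / 10) : PAcont q = PAseries q := by
  refine PAcont_eq_PAseries (mem_slitDisc_of_norm_lt (hq.trans (by norm_num))) ?_
  have htri := norm_sub_norm_le 1 (2 * q)
  rw [norm_one, norm_mul, Complex.norm_ofNat] at htri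
  nlinarith [norm_nonneg q]

end Continuation

/-! ### Holomorphic functions defined by integrals, and the Fermi integral -/

section Analysis

open MeasureTheory

lemma exp_neg_mul_abs_le {a : ℝ} (ha : 0 < a) (x : ℝ) :
    Real.exp (-(a * |x|)) ≤ (min 1 (a ^ 2 / 2))⁻¹ * (1 + x ^ 2)⁻¹ := by
  rw [Real.exp_neg, ← mul_inv]
  refine inv_anti₀ (by positivity) ?_
  calc min 1 (a ^ 2 / 2) * (1 + x ^ 2) ≤ 1 + a ^ 2 / 2 * x ^ 2 := by
        rw [mul_add, mul_one]
        gcongr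
        exacts [min_le_left _ _, min_le_right _ _]
    _ ≤ 1 + a * |x| + (a * |x|) ^ 2 / 2 := by
        rw [mul_pow, sq_abs]
        linarith [mul_nonneg ha.le (abs_nonneg x)]
    _ ≤ Real.exp (a * |x|) := Real.quadratic_le_exp_of_nonneg (by positivity)

lemma integrable_exp_neg_mul_abs {a : ℝ} (ha : 0 < a) :
    Integrable fun x : ℝ ↦ Real.exp (-(a * |x|)) := by
  refine (integrable_inv_one_add_sq.const_mul (min 1 (a ^ 2 / 2))⁻¹).mono'
    (by fun_prop) (.of_forall fun x ↦ ?_)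
  rw [Real.norm_of_nonneg (Real.exp_pos _).le]
  exact exp_neg_mul_abs_le ha x

lemma aestronglyMeasurable_deriv_of_mem_nhds {α E : Type*} [MeasurableSpace α] {μ : Measure α}
    [NormedAddCommGroup E] [NormedSpace ℂ E] {F : ℂ → α → E} {U : Set ℂ} {z : ℂ} (hU : U ∈ 𝓝 z)
    (hF : ∀ w ∈ U, AEStronglyMeasurable (F w) μ)
    (hd : ∀ s, DifferentiableAt ℂ (F · s) z) :
    AEStronglyMeasurable (fun s ↦ deriv (F · s) z) μ := by
  obtain ⟨r, hr, hrU⟩ := Metric.mem_nhds_iff.1 hU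
  obtain ⟨t, -, ht, htlim⟩ := exists_seq_strictAnti_tendsto' hr
  set w : ℕ → ℂ := fun n ↦ z + (t n : ℂ) with hw
  have hwU (n : ℕ) : w n ∈ U := hrU <| by
    simpa [hw, abs_of_pos (ht n).1] using (ht n).2
  have hwlim : Tendsto w atTop (𝓝[≠] z) := by
    refine tendsto_nhdsWithin_iff.2 ⟨?_, .of_forall fun n ↦ by simp [hw, (ht n).1.ne']⟩
    simpa [hw, Function.comp_def] using
      ((continuous_ofReal.tendsto 0).comp htlim).const_add z
  refine aestronglyMeasurable_of_tendsto_ae atTop (f := fun n s ↦ slope (F · s) z (w n))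
    (fun n ↦ ?_) (.of_forall fun s ↦ (hasDerivAt_iff_tendsto_slope.1 (hd s).hasDerivAt).comp hwlim)
  simp only [slope_def_module]
  exact ((hF _ (hwU n)).sub (hF z (mem_of_mem_nhds hU))).const_smul (w n - z)⁻¹

lemma differentiableOn_integral_of_norm_le {α E : Type*} [MeasurableSpace α] {μ : Measure α}
    [NormedAddCommGroup E] [NormedSpace ℂ E] [CompleteSpace E] {F : ℂ → α → E} {U : Set ℂ}
    {bound : α → ℝ} (hU : IsOpen U)
    (hF : ∀ z ∈ U, AEStronglyMeasurable (F z) μ) (hd : ∀ s, DifferentiableOn ℂ (F · s) U)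
    (hb : ∀ z ∈ U, ∀ s, ‖F z s‖ ≤ bound s) (hbi : Integrable bound μ) :
    DifferentiableOn ℂ (fun z ↦ ∫ s, F z s ∂μ) U := by
  intro z₀ hz₀
  obtain ⟨r, hr, hrU⟩ := Metric.isOpen_iff.1 hU z₀ hz₀
  have hsub {z : ℂ} (hz : z ∈ Metric.ball z₀ (r / 2)) : Metric.closedBall z (r / 3) ⊆ U :=
    (Metric.closedBall_subset_ball' (by rw [Metric.mem_ball] at hz; linarith)).trans hrU
  have hdz {z : ℂ} (hz : z ∈ U) (s : α) : DifferentiableAt ℂ (F · s) z :=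
    (hd s).differentiableAt (hU.mem_nhds hz)
  have hderiv (s : α) (z : ℂ) (hz : z ∈ Metric.ball z₀ (r / 2)) :
      ‖deriv (F · s) z‖ ≤ bound s / (r / 3) :=
    norm_deriv_le_of_forall_mem_sphere_norm_le (by positivity)
      ((hd s).diffContOnCl_ball (hsub hz))
      fun w hw ↦ hb w (hsub hz (Metric.sphere_subset_closedBall hw)) s
  have hmem {z : ℂ} (hz : z ∈ Metric.ball z₀ (r / 2)) : z ∈ U :=
    hsub hz (Metric.mem_closedBall_self (by positivity))
  refine (hasDerivAt_integral_of_dominated_loc_of_deriv_le (bound := fun s ↦ bound s / (r / 3))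
    (F' := fun z s ↦ deriv (F · s) z) (Metric.ball_mem_nhds z₀ (half_pos hr))
    ((hU.eventually_mem hz₀).mono hF) (hbi.mono' (hF z₀ hz₀) (.of_forall (hb z₀ hz₀)))
    (aestronglyMeasurable_deriv_of_mem_nhds (hU.mem_nhds hz₀) hF (hdz hz₀))
    (.of_forall hderiv) (hbi.div_const _)
    (.of_forall fun s z hz ↦ (hdz (hmem hz) s).hasDerivAt)).2
    |>.differentiableAt.differentiableWithinAt

lemma eqOn_of_eventually_ofReal_eq {E : Type*} [NormedAddCommGroup E] [NormedSpace ℂ E]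
    {f g : ℂ → E} {U : Set ℂ} (hf : AnalyticOnNhd ℂ f U) (hg : AnalyticOnNhd ℂ g U)
    (hU : IsPreconnected U) {x₀ : ℝ} (hx₀ : (x₀ : ℂ) ∈ U)
    (hfg : ∀ᶠ x : ℝ in 𝓝 x₀, f x = g x) : Set.EqOn f g U := by
  have hlim : Tendsto ((↑) : ℝ → ℂ) (𝓝[≠] x₀) (𝓝[≠] (x₀ : ℂ)) :=
    continuous_ofReal.continuousWithinAt.tendsto_nhdsWithin fun x hx ↦ by simpa using hx
  exact hf.eqOn_of_preconnected_of_frequently_eq hg hU hx₀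
    (hlim.frequently (hfg.filter_mono nhdsWithin_le_nhds).frequently)

lemma one_add_norm_exp_le_of_one_lt_abs_re {z : ℂ} (hz : 1 < |z.re|) :
    1 / 3 * (1 + ‖exp z‖) ≤ ‖1 + exp z‖ := by
  have h₁ : 1 - ‖exp z‖ ≤ ‖1 + exp z‖ := by
    simpa using norm_sub_norm_le (1 : ℂ) (-exp z)
  have h₂ : ‖exp z‖ - 1 ≤ ‖1 + exp z‖ := by
    simpa [add_comm] using norm_sub_norm_le (exp z) (-1 : ℂ)
  rcases lt_abs.1 hz with h | h
  · have : 2 ≤ ‖exp z‖ := by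
      rw [norm_exp]
      linarith [Real.add_one_le_exp z.re]
    linarith
  · have : ‖exp z‖ ≤ 2⁻¹ := by
      rw [norm_exp, ← neg_neg z.re, Real.exp_neg]
      exact inv_anti₀ two_pos (by linarith [Real.add_one_le_exp (-z.re)])
    linarith

lemma exists_pos_mul_le_norm_one_add_exp {S : Set ℂ} (hS : IsClosed S) {Y : ℝ}
    (hY : ∀ z ∈ S, |z.re| ≤ 1 → |z.im| ≤ Y) (hne : ∀ z ∈ S, 1 + exp z ≠ 0) :
    ∃ c > 0, ∀ z ∈ S, c * (1 + ‖exp z‖) ≤ ‖1 + exp z‖ := by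
  set K : Set ℂ := S ∩ (Set.Icc (-1) 1 ×ℂ Set.Icc (-Y) Y)
  have hK : IsCompact K := (isCompact_Icc.reProdIm isCompact_Icc).inter_left hS
  have hcont : ContinuousOn (fun z : ℂ ↦ ‖1 + exp z‖ / (1 + ‖exp z‖)) K :=
    (Continuous.div (by fun_prop) (by fun_prop) fun z ↦ by positivity).continuousOn
  have hpos : ∀ z ∈ K, 0 < ‖1 + exp z‖ / (1 + ‖exp z‖) := fun z hz ↦ by
    have : 0 < ‖1 + exp z‖ := norm_pos_iff.2 (hne z hz.1)
    positivity
  obtain ⟨c, hc, hcK⟩ := hK.exists_forall_le' hcont hpos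
  refine ⟨min (1 / 3) c, lt_min (by norm_num) hc, fun z hz ↦ ?_⟩
  rcases le_or_gt |z.re| 1 with h | h
  · have hzK : z ∈ K := ⟨hz, mem_reProdIm.2 ⟨abs_le.1 h, abs_le.1 (hY z hz h)⟩⟩
    rw [← le_div_iff₀ (by positivity)]
    exact (min_le_right _ _).trans (hcK z hzK)
  · refine le_trans ?_ (one_add_norm_exp_le_of_one_lt_abs_re h)
    gcongr
    exact min_le_left _ _

lemma exists_pos_mul_le_norm_one_add_exp_of_cone {κ : ℝ} (hκ : 0 ≤ κ) :
    ∃ c > 0, ∀ z : ℂ, |z.im| ≤ κ * |z.re| → c * (1 + ‖exp z‖) ≤ ‖1 + exp z‖ := by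
  refine exists_pos_mul_le_norm_one_add_exp (S := {z : ℂ | |z.im| ≤ κ * |z.re|}) (Y := κ)
    (isClosed_le (by fun_prop) (by fun_prop))
    (fun z (hz : |z.im| ≤ κ * |z.re|) h ↦ hz.trans (mul_le_of_le_one_right hκ h))
    fun z (hz : |z.im| ≤ κ * |z.re|) h ↦ ?_
  have hexp : exp z = -1 := eq_neg_of_add_eq_zero_right h
  have hre : z.re = 0 := by
    rw [← Real.exp_eq_one_iff, ← norm_exp, hexp, norm_neg, norm_one]
  have him : z.im = 0 := by simpa [hre] using hz
  rw [show z = 0 from Complex.ext hre him, exp_zero] at hexp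
  norm_num at hexp

lemma exp_mul_le_exp_neg_mul_abs_mul {δ b m : ℝ} (hb : δ ≤ b) (hm : δ ≤ m - b) (s : ℝ) :
    Real.exp (b * s) ≤ Real.exp (-(δ * |s|)) * (1 + Real.exp (m * s)) := by
  rw [mul_add, mul_one, ← Real.exp_add]
  rcases le_total 0 s with hs | hs
  · refine le_trans (Real.exp_le_exp.2 ?_) (le_add_of_nonneg_left (Real.exp_pos _).le)
    rw [abs_of_nonneg hs]
    nlinarith
  · refine le_trans (Real.exp_le_exp.2 ?_) (le_add_of_nonneg_right (Real.exp_pos _).le)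
    rw [abs_of_nonpos hs]
    nlinarith

/-- The Fermi-type kernel `e^{βζ} / (1 + e^{Lζ})`, the summand of the bilateral series to which
Poisson summation is applied. -/
def fermiKernel (β L ζ : ℂ) : ℂ := exp (β * ζ) / (1 + exp (L * ζ))

lemma differentiableAt_fermiKernel_right {β L ζ : ℂ} (h : 1 + exp (L * ζ) ≠ 0) :
    DifferentiableAt ℂ (fermiKernel β L) ζ := by
  unfold fermiKernel
  fun_prop (disch := assumption)

lemma differentiableAt_fermiKernel_middle {β L ζ : ℂ} (h : 1 + exp (L * ζ) ≠ 0) :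
    DifferentiableAt ℂ (fermiKernel β · ζ) L := by
  unfold fermiKernel
  fun_prop (disch := assumption)

lemma continuous_fermiKernel_ofReal {β L : ℂ} (h : ∀ s : ℝ, 1 + exp (L * s) ≠ 0) :
    Continuous fun s : ℝ ↦ fermiKernel β L s := by
  unfold fermiKernel
  fun_prop (disch := assumption)

lemma one_add_exp_ne_zero_of_le {c : ℝ} (hc : 0 < c) {x : ℝ} (hx : 0 ≤ x) {z : ℂ}
    (h : c * (1 + x) ≤ ‖1 + exp z‖) : 1 + exp z ≠ 0 :=
  norm_pos_iff.1 (lt_of_lt_of_le (by positivity) h)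

lemma norm_fermiKernel_le {β L ζ : ℂ} {c δ b m s : ℝ} (hc : 0 < c) (hb : δ ≤ b)
    (hm : δ ≤ m - b) (h : c * (1 + Real.exp (m * s)) ≤ ‖1 + exp (L * ζ)‖) :
    ‖fermiKernel β L ζ‖ ≤
      c⁻¹ * (‖exp (β * ζ)‖ * Real.exp (-(b * s))) * Real.exp (-(δ * |s|)) := by
  have hpos : 0 < c * (1 + Real.exp (m * s)) := by positivity
  rw [fermiKernel, norm_div, div_le_iff₀ (hpos.trans_le h)]
  calc ‖exp (β * ζ)‖ = ‖exp (β * ζ)‖ * Real.exp (-(b * s)) * Real.exp (b * s) := by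
        rw [mul_assoc, ← Real.exp_add, neg_add_cancel, Real.exp_zero, mul_one]
    _ ≤ ‖exp (β * ζ)‖ * Real.exp (-(b * s)) *
          (Real.exp (-(δ * |s|)) * (1 + Real.exp (m * s))) := by
        gcongr
        exact exp_mul_le_exp_neg_mul_abs_mul hb hm s
    _ = c⁻¹ * (‖exp (β * ζ)‖ * Real.exp (-(b * s))) * Real.exp (-(δ * |s|)) *
          (c * (1 + Real.exp (m * s))) := by field_simp
    _ ≤ _ := by gcongr

lemma norm_fermiKernel_ofReal_le {β L : ℂ} {c δ s : ℝ} (hc : 0 < c) (hβ : δ ≤ β.re)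
    (hL : δ ≤ L.re - β.re) (h : c * (1 + ‖exp (L * s)‖) ≤ ‖1 + exp (L * s)‖) :
    ‖fermiKernel β L s‖ ≤ c⁻¹ * Real.exp (-(δ * |s|)) := by
  rw [norm_exp, re_mul_ofReal] at h
  refine (norm_fermiKernel_le hc hβ hL h).trans_eq ?_
  rw [norm_exp, re_mul_ofReal, ← Real.exp_add, add_neg_cancel, Real.exp_zero, mul_one]

lemma differentiableOn_integral_fermiKernel {β : ℂ} (hβ : 0 < β.re) {m Y : ℝ} (hm : β.re < m)
    (hY : 0 ≤ Y) :
    DifferentiableOn ℂ (fun L ↦ ∫ s : ℝ, fermiKernel β L s) {L | m < L.re ∧ |L.im| < Y} := by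
  have hm0 : 0 < m := hβ.trans hm
  obtain ⟨c, hc, hcone⟩ := exists_pos_mul_le_norm_one_add_exp_of_cone (κ := Y / m) (by positivity)
  set S : Set ℂ := {L | m < L.re ∧ |L.im| < Y}
  have hS : IsOpen S :=
    (isOpen_lt continuous_const continuous_re).inter (isOpen_lt continuous_im.abs continuous_const)
  have hlow {L : ℂ} (hL : L ∈ S) (s : ℝ) : c * (1 + ‖exp (L * s)‖) ≤ ‖1 + exp (L * s)‖ := by
    refine hcone _ ?_
    rw [im_mul_ofReal, re_mul_ofReal, abs_mul, abs_mul, abs_of_pos (hm0.trans hL.1), ← mul_assoc]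
    gcongr
    rw [div_mul_eq_mul_div, le_div_iff₀ hm0]
    exact mul_le_mul hL.2.le hL.1.le hm0.le hY
  have hne {L : ℂ} (hL : L ∈ S) (s : ℝ) : 1 + exp (L * s) ≠ 0 :=
    one_add_exp_ne_zero_of_le hc (norm_nonneg _) (hlow hL s)
  refine differentiableOn_integral_of_norm_le
    (bound := fun s ↦ c⁻¹ * Real.exp (-(min β.re (m - β.re) * |s|))) hS
    (fun L hL ↦ (continuous_fermiKernel_ofReal (hne hL)).aestronglyMeasurable)
    (fun s L hL ↦ (differentiableAt_fermiKernel_middle (hne hL s)).differentiableWithinAt)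
    (fun L hL s ↦ norm_fermiKernel_ofReal_le hc (min_le_left _ _)
      ((min_le_right _ _).trans (sub_le_sub_right hL.1.le _)) (hlow hL s))
    ((integrable_exp_neg_mul_abs (lt_min hβ (sub_pos.2 hm))).const_mul _)

lemma sigmoid_cpow_mul_one_sub_sigmoid_cpow (α : ℂ) (s : ℝ) :
    (Real.sigmoid s : ℂ) ^ α * ((1 - Real.sigmoid s : ℝ) : ℂ) ^ (1 - α) = fermiKernel α 1 s := by
  have hp : 0 < Real.sigmoid s := Real.sigmoid_pos s
  have hp' : 0 < 1 - Real.sigmoid s := sub_pos.2 (Real.sigmoid_lt_one s)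
  set l : ℝ := Real.log (1 - Real.sigmoid s)
  have hlog : Real.log (Real.sigmoid s) = l + s := by
    simp only [l]
    rw [← Real.sigmoid_neg, ← Real.sigmoid_mul_rexp_neg,
      Real.log_mul hp.ne' (Real.exp_pos _).ne', Real.log_exp, neg_add_cancel_right]
  have hinv : (1 + exp s)⁻¹ = exp l := by
    rw [← ofReal_exp l, Real.exp_log hp', ← Real.sigmoid_neg, Real.sigmoid_def]
    push_cast
    rw [neg_neg]
  rw [cpow_def_of_ne_zero (ofReal_ne_zero.2 hp.ne'), cpow_def_of_ne_zero (ofReal_ne_zero.2 hp'.ne'),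
    ← ofReal_log hp.le, ← ofReal_log hp'.le, hlog, fermiKernel, one_mul, div_eq_mul_inv, hinv,
    ← exp_add, ← exp_add]
  congr 1
  push_cast
  ring

lemma integral_fermiKernel_one {α : ℂ} (h0 : 0 < α.re) (h1 : α.re < 1) :
    ∫ s : ℝ, fermiKernel α 1 s = Real.pi / sin (Real.pi * α) := by
  have hbeta : betaIntegral α (1 - α) = Real.pi / sin (Real.pi * α) := by
    have := Gamma_mul_Gamma_eq_betaIntegral h0 (show 0 < (1 - α).re by simpa using h1)
    rw [Gamma_mul_Gamma_one_sub, add_sub_cancel, Gamma_one, one_mul] at this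
    exact this.symm
  rw [← hbeta, betaIntegral, intervalIntegral.integral_of_le zero_le_one,
    integral_Ioc_eq_integral_Ioo, ← Real.range_sigmoid, ← Set.image_univ,
    integral_image_eq_integral_abs_deriv_smul MeasurableSet.univ
      (fun x _ ↦ (Real.hasDerivAt_sigmoid x).hasDerivWithinAt) Real.sigmoid_injective.injOn,
    setIntegral_univ]
  refine integral_congr_ae (.of_forall fun s ↦ ?_)
  have hp : 0 < Real.sigmoid s := Real.sigmoid_pos s
  have hp' : 0 < 1 - Real.sigmoid s := sub_pos.2 (Real.sigmoid_lt_one s)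
  have hc : (Real.sigmoid s : ℂ) ≠ 0 := ofReal_ne_zero.2 hp.ne'
  have hc' : ((1 - Real.sigmoid s : ℝ) : ℂ) ≠ 0 := ofReal_ne_zero.2 hp'.ne'
  beta_reduce
  rw [← sigmoid_cpow_mul_one_sub_sigmoid_cpow α s, abs_of_pos (mul_pos hp hp'), real_smul]
  push_cast at hc' ⊢
  rw [cpow_sub α 1 hc, cpow_sub (1 - α) 1 hc', cpow_one, cpow_one]
  field_simp

lemma integral_fermiKernel_ofReal {β : ℂ} {L : ℝ} (h0 : 0 < β.re) (h1 : β.re < L) :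
    ∫ s : ℝ, fermiKernel β L s = Real.pi / L / sin (Real.pi * β / L) := by
  have hL : 0 < L := h0.trans h1
  have hLc : (L : ℂ) ≠ 0 := ofReal_ne_zero.2 hL.ne'
  have hre : (β / L).re = β.re / L := div_ofReal_re β L
  have hscale (s : ℝ) : fermiKernel β L s = fermiKernel (β / L) 1 (L * s : ℝ) := by
    simp only [fermiKernel, ofReal_mul, one_mul]
    congr 2
    field_simp
  simp only [hscale]
  rw [Measure.integral_comp_mul_left (fun s : ℝ ↦ fermiKernel (β / L) 1 s) L,
    integral_fermiKernel_one (by rw [hre]; positivity) (by rwa [hre, div_lt_one hL]),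
    abs_of_pos (by positivity), real_smul, ofReal_inv, mul_div_assoc (Real.pi : ℂ) β]
  ring

lemma sin_pi_mul_div_ne_zero {β L : ℂ} (h0 : 0 < β.re) (h1 : β.re < L.re) :
    sin (Real.pi * β / L) ≠ 0 := by
  have hL : 0 < L.re := h0.trans h1
  have hL0 : L ≠ 0 := fun h ↦ by simp [h] at hL
  have hpi : (Real.pi : ℂ) ≠ 0 := ofReal_ne_zero.2 Real.pi_ne_zero
  intro h
  obtain ⟨k, hk⟩ := sin_eq_zero_iff.1 h
  have hβ : β = k * L := by
    field_simp at hk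
    rw [hk, mul_comm]
  have hre : β.re = k * L.re := by simp [hβ]
  rw [hre] at h0 h1
  have hk0 : (0 : ℝ) < k := pos_of_mul_pos_left h0 hL.le
  have hk1 : (k : ℝ) < 1 := by
    by_contra! hk
    exact h1.not_ge (le_mul_of_one_le_left hL.le hk)
  norm_cast at hk0 hk1
  omega

lemma integral_fermiKernel {β L : ℂ} (h0 : 0 < β.re) (h1 : β.re < L.re) :
    ∫ s : ℝ, fermiKernel β L s = Real.pi / L / sin (Real.pi * β / L) := by
  set U : Set ℂ := {L | β.re < L.re}
  have hU : IsOpen U := isOpen_lt continuous_const continuous_re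
  have hf : AnalyticOnNhd ℂ (fun L ↦ ∫ s : ℝ, fermiKernel β L s) U := by
    refine DifferentiableOn.analyticOnNhd (fun M hM ↦ ?_) hU
    obtain ⟨m, hm, hmM⟩ := exists_between (show β.re < M.re from hM)
    refine ((differentiableOn_integral_fermiKernel h0 hm (by positivity)).differentiableAt
      (IsOpen.mem_nhds ?_ ⟨hmM, lt_add_one |M.im|⟩)).differentiableWithinAt
    exact (isOpen_lt continuous_const continuous_re).inter
      (isOpen_lt continuous_im.abs continuous_const)
  have hg : AnalyticOnNhd ℂ (fun L : ℂ ↦ Real.pi / L / sin (Real.pi * β / L)) U := by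
    refine DifferentiableOn.analyticOnNhd (fun M (hM : β.re < M.re) ↦ ?_) hU
    have hM0 : M ≠ 0 := fun h ↦ by
      rw [h, zero_re] at hM
      linarith
    have hsin := sin_pi_mul_div_ne_zero h0 hM
    exact DifferentiableAt.differentiableWithinAt (by fun_prop (disch := assumption))
  have hx₀ : ((β.re + 1 : ℝ) : ℂ) ∈ U := by simp [U]
  refine eqOn_of_eventually_ofReal_eq hf hg (convex_halfSpace_re_gt _).isPreconnected hx₀ ?_ h1
  filter_upwards [lt_mem_nhds (lt_add_one β.re)] with x hx
  exact integral_fermiKernel_ofReal h0 hx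

end Analysis

/-! ### Poisson summation for the Fermi kernel -/

section Poisson

lemma inv_re_pos {L : ℂ} (hL : 0 < L.re) : 0 < L⁻¹.re := by
  rw [inv_re]
  exact div_pos hL (normSq_pos.2 fun h ↦ by simp [h] at hL)

lemma abs_im_mul_le {L ζ : ℂ} (hL : 0 < L.re) {h : ℝ} (hζ : |ζ.im| ≤ h)
    (hre : |(L * ζ).re| ≤ 1) :
    |(L * ζ).im| ≤ L.re * h + |L.im| * ((1 + |L.im| * h) / L.re) := by
  have him : |L.im * ζ.im| ≤ |L.im| * h := by
    rw [abs_mul]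
    gcongr
  have hζre : |ζ.re| ≤ (1 + |L.im| * h) / L.re := by
    rw [le_div_iff₀ hL]
    calc |ζ.re| * L.re = |(L * ζ).re + L.im * ζ.im| := by
          rw [mul_re, sub_add_cancel, abs_mul, abs_of_pos hL, mul_comm]
      _ ≤ _ := (abs_add_le _ _).trans (add_le_add hre him)
  rw [mul_im]
  refine (abs_add_le _ _).trans ?_
  rw [abs_mul, abs_mul, abs_of_pos hL]
  gcongr

lemma one_add_exp_mul_ne_zero {L ζ : ℂ} (hL : 0 < L.re)
    (hζ : |ζ.im| < Real.pi * L⁻¹.re) : 1 + exp (L * ζ) ≠ 0 := by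
  have hL0 : L ≠ 0 := fun h ↦ by simp [h] at hL
  have hH : 0 < Real.pi * L⁻¹.re := mul_pos Real.pi_pos (inv_re_pos hL)
  intro h
  have hexp : exp (L * ζ) = exp (Real.pi * I) := by
    rw [exp_pi_mul_I, eq_neg_of_add_eq_zero_right h]
  obtain ⟨n, hn⟩ := exp_eq_exp_iff_exists_int.1 hexp
  have hζn : ζ = ((2 * n + 1 : ℤ) : ℝ) * ((Real.pi : ℝ) * (I * L⁻¹)) := by
    rw [← mul_right_inj' hL0, hn]
    push_cast
    field_simp
    ring
  have him : ζ.im = ((2 * n + 1 : ℤ) : ℝ) * (Real.pi * L⁻¹.re) := by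
    rw [hζn, im_ofReal_mul, im_ofReal_mul, I_mul_im]
  have hn1 : (1 : ℝ) ≤ |((2 * n + 1 : ℤ) : ℝ)| := by
    exact_mod_cast Int.one_le_abs (show 2 * n + 1 ≠ 0 by omega)
  rw [him, abs_mul, abs_of_pos hH] at hζ
  exact hζ.not_ge (le_mul_of_one_le_left hH.le hn1)

lemma exists_pos_mul_le_norm_one_add_exp_of_strip {L : ℂ} (hL : 0 < L.re) {h : ℝ}
    (hh : h < Real.pi * L⁻¹.re) :
    ∃ c > 0, ∀ ζ : ℂ, |ζ.im| ≤ h → c * (1 + ‖exp (L * ζ)‖) ≤ ‖1 + exp (L * ζ)‖ := by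
  have hL0 : L ≠ 0 := fun h ↦ by simp [h] at hL
  have hmul (z : ℂ) : L * (z / L) = z := mul_div_cancel₀ z hL0
  obtain ⟨c, hc, hcS⟩ := exists_pos_mul_le_norm_one_add_exp (S := {z : ℂ | |(z / L).im| ≤ h})
    (isClosed_le (continuous_im.comp (continuous_id.div_const L)).abs continuous_const)
    (fun z hz hre ↦ by simpa only [hmul] using abs_im_mul_le hL hz (by rwa [hmul]))
    (fun z hz ↦ by simpa only [hmul] using one_add_exp_mul_ne_zero hL (lt_of_le_of_lt hz hh))
  refine ⟨c, hc, fun ζ hζ ↦ hcS _ ?_⟩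
  simpa [mul_div_cancel_left₀ _ hL0] using hζ

lemma exists_norm_fermiKernel_le_of_strip {β L : ℂ} (hβ : 0 < β.re) (hβL : β.re < L.re) {h : ℝ}
    (hh : h < Real.pi * L⁻¹.re) :
    ∃ C > 0, ∃ δ > 0, ∀ ζ : ℂ, |ζ.im| ≤ h →
      ‖fermiKernel β L ζ‖ ≤ C * Real.exp (-(δ * |ζ.re|)) := by
  obtain ⟨c, hc, hcζ⟩ := exists_pos_mul_le_norm_one_add_exp_of_strip (hβ.trans hβL) hh
  have habs (x : ℝ) {y : ℝ} (hy : |y| ≤ h) : |x * y| ≤ |x| * h := by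
    rw [abs_mul]
    gcongr
  set c' := c * Real.exp (-(|L.im| * h)) with hc'
  have hc'0 : 0 < c' := by positivity
  refine ⟨c'⁻¹ * Real.exp (|β.im| * h), by positivity, min β.re (L.re - β.re),
    lt_min hβ (sub_pos.2 hβL), fun ζ hζ ↦ ?_⟩
  have hlow : c' * (1 + Real.exp (L.re * ζ.re)) ≤ ‖1 + exp (L * ζ)‖ := by
    refine le_trans ?_ (hcζ ζ hζ)
    rw [hc', mul_assoc, mul_add, mul_one, ← Real.exp_add, norm_exp, mul_re]
    have := habs L.im hζ
    gcongr
    · exact Real.exp_le_one_iff.2 (neg_nonpos.2 ((abs_nonneg _).trans this))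
    · linarith [le_abs_self (L.im * ζ.im)]
  refine (norm_fermiKernel_le hc'0 (min_le_left _ (L.re - β.re)) (min_le_right _ _) hlow).trans ?_
  rw [norm_exp, mul_re, ← Real.exp_add]
  gcongr
  linarith [habs β.im hζ, neg_abs_le (β.im * ζ.im)]

lemma summable_exp_neg_mul_abs_intCast {a : ℝ} (ha : 0 < a) :
    Summable fun k : ℤ ↦ Real.exp (-(a * |(k : ℝ)|)) := by
  have h : Summable fun n : ℕ ↦ Real.exp (-(a * n)) := by
    simpa only [mul_neg, mul_comm] using Real.summable_exp_nat_mul_iff.2 (neg_lt_zero.2 ha)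
  exact .of_nat_of_neg (by simpa using h) (by simpa using h)

lemma exists_summable_norm_fermiKernel_add_intCast_le {β L : ℂ} (hβ : 0 < β.re)
    (hβL : β.re < L.re) (R : ℝ) {h : ℝ} (hh : h < Real.pi * L⁻¹.re) :
    ∃ u : ℤ → ℝ, Summable u ∧
      ∀ z : ℂ, |z.re| ≤ R → |z.im| ≤ h → ∀ n : ℤ, ‖fermiKernel β L (z + n)‖ ≤ u n := by
  obtain ⟨C, hC, δ, hδ, hCδ⟩ := exists_norm_fermiKernel_le_of_strip hβ hβL hh
  refine ⟨fun n ↦ C * (Real.exp (δ * R) * Real.exp (-(δ * |(n : ℝ)|))),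
    ((summable_exp_neg_mul_abs_intCast hδ).mul_left _).mul_left C, fun z hre him n ↦ ?_⟩
  refine (hCδ (z + n) (by simpa using him)).trans ?_
  beta_reduce
  rw [← Real.exp_add, add_re, intCast_re]
  have hn : |(n : ℝ)| ≤ |z.re + n| + R := by
    have := abs_sub (z.re + n) z.re
    rw [add_sub_cancel_left] at this
    linarith
  gcongr
  nlinarith

/-- The `k`-th Fourier coefficient of the periodization of `fermiKernel β L`, up to the factor
`L⁻¹`; the numbers `p_k` are `fermiCoeff (log v) (log (1/q)) k`. -/
def fermiCoeff (β L : ℂ) (k : ℤ) : ℂ :=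
  (Real.pi : ℂ) / sin ((Real.pi : ℂ) * (β / L) + 2 * I * (k : ℂ) * (Real.pi : ℂ) ^ 2 / L)

lemma exp_abs_im_div_four_le_norm_sin {z : ℂ} (hz : 1 ≤ |z.im|) :
    Real.exp |z.im| / 4 ≤ ‖sin z‖ := by
  have h₁ : ‖exp (-z * I)‖ = Real.exp z.im := by simp [norm_exp]
  have h₂ : ‖exp (z * I)‖ = Real.exp (-z.im) := by simp [norm_exp]
  have hsin : ‖sin z‖ = ‖exp (-z * I) - exp (z * I)‖ / 2 := by simp [sin]
  have hdiff := abs_norm_sub_norm_le (exp (-z * I)) (exp (z * I))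
  have hsymm : |Real.exp z.im - Real.exp (-z.im)| = Real.exp |z.im| - Real.exp (-|z.im|) := by
    have hle : Real.exp (-|z.im|) ≤ Real.exp |z.im| := Real.exp_le_exp.2 (by linarith)
    rcases abs_choice z.im with h | h <;> rw [h] at hle ⊢
    · exact abs_of_nonneg (sub_nonneg.2 hle)
    · rw [neg_neg] at hle ⊢
      rw [abs_sub_comm, abs_of_nonneg (sub_nonneg.2 hle)]
  rw [h₁, h₂, hsymm] at hdiff
  have hsmall : Real.exp (-|z.im|) ≤ 1 := Real.exp_le_one_iff.2 (by linarith)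
  linarith [Real.add_one_le_exp |z.im|]

lemma im_fermiCoeff_arg (β L : ℂ) (k : ℤ) :
    ((Real.pi : ℂ) * (β / L) + 2 * I * (k : ℂ) * (Real.pi : ℂ) ^ 2 / L).im =
      Real.pi * (β / L).im + 2 * Real.pi * (Real.pi * L⁻¹.re) * k := by
  have : 2 * I * (k : ℂ) * (Real.pi : ℂ) ^ 2 / L =
      ((2 * Real.pi * Real.pi * k : ℝ) : ℂ) * (I * L⁻¹) := by
    push_cast
    ring
  rw [this, add_im, im_ofReal_mul, im_ofReal_mul, I_mul_im]
  ring

lemma eventually_norm_fermiCoeff_le (β : ℂ) {L : ℂ} (hL : 0 < L.re) :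
    ∀ᶠ k : ℤ in cofinite, ‖fermiCoeff β L k‖ ≤ 4 * Real.pi * Real.exp (Real.pi * |(β / L).im|) *
      Real.exp (-(2 * Real.pi * (Real.pi * L⁻¹.re) * |(k : ℝ)|)) := by
  have hpi := Real.pi_pos
  have hinv := inv_re_pos hL
  set B := Real.pi * |(β / L).im|
  set a := 2 * Real.pi * (Real.pi * L⁻¹.re) with ha
  have ha0 : 0 < a := by positivity
  have habs : Tendsto (fun k : ℤ ↦ |(k : ℝ)|) cofinite atTop :=
    (tendsto_norm_cocompact_atTop (E := ℝ)).comp Int.tendsto_coe_cofinite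
  filter_upwards [habs.eventually_ge_atTop ((1 + B) / a)] with k hk
  rw [div_le_iff₀' ha0] at hk
  set z := (Real.pi : ℂ) * (β / L) + 2 * I * (k : ℂ) * (Real.pi : ℂ) ^ 2 / L
  have hz : a * |(k : ℝ)| - B ≤ |z.im| := by
    rw [im_fermiCoeff_arg, ← ha, ← abs_of_pos ha0, ← abs_mul, abs_of_pos ha0,
      show B = |-(Real.pi * (β / L).im)| by rw [abs_neg, abs_mul, abs_of_pos hpi]]
    exact (abs_sub_abs_le_abs_sub _ _).trans_eq (by rw [sub_neg_eq_add, add_comm])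
  have hsin : Real.exp (a * |(k : ℝ)| - B) / 4 ≤ ‖sin z‖ :=
    le_trans (by gcongr) (exp_abs_im_div_four_le_norm_sin (by linarith))
  rw [fermiCoeff, norm_div, norm_real, Real.norm_of_nonneg hpi.le]
  calc Real.pi / ‖sin z‖ ≤ Real.pi / (Real.exp (a * |(k : ℝ)| - B) / 4) := by gcongr
    _ = 4 * Real.pi * Real.exp B * Real.exp (-(a * |(k : ℝ)|)) := by
      rw [Real.exp_sub, Real.exp_neg]
      field_simp

lemma summable_norm_fermiCoeff_mul_exp (β : ℂ) {L : ℂ} (hL : 0 < L.re) {h : ℝ}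
    (hh : h < Real.pi * L⁻¹.re) :
    Summable fun k : ℤ ↦ ‖fermiCoeff β L k‖ * Real.exp (2 * Real.pi * h * |(k : ℝ)|) := by
  have ha : 0 < 2 * Real.pi * (Real.pi * L⁻¹.re - h) :=
    mul_pos Real.two_pi_pos (sub_pos.2 hh)
  refine Summable.of_norm_bounded_eventually
    ((summable_exp_neg_mul_abs_intCast ha).mul_left
      (4 * Real.pi * Real.exp (Real.pi * |(β / L).im|))) ?_
  filter_upwards [eventually_norm_fermiCoeff_le β hL] with k hk
  rw [Real.norm_of_nonneg (by positivity)]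
  refine (mul_le_mul_of_nonneg_right hk (Real.exp_pos _).le).trans_eq ?_
  rw [mul_assoc, ← Real.exp_add]
  ring_nf

lemma norm_fermiCoeff_mul_exp_le (β L : ℂ) {w : ℂ} {h : ℝ} (hw : |w.im| ≤ h) (k : ℤ) :
    ‖fermiCoeff β L k * exp (-2 * (Real.pi : ℂ) * I * (k : ℂ) * w)‖ ≤
      ‖fermiCoeff β L k‖ * Real.exp (2 * Real.pi * h * |(k : ℝ)|) := by
  have harg : -2 * (Real.pi : ℂ) * I * (k : ℂ) * w = ((-2 * Real.pi * k : ℝ) : ℂ) * (I * w) := by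
    push_cast
    ring
  have hre : (-2 * (Real.pi : ℂ) * I * (k : ℂ) * w).re = 2 * Real.pi * (k * w.im) := by
    rw [harg, re_ofReal_mul, I_mul_re]
    ring
  rw [norm_mul, norm_exp, hre, mul_assoc (2 * Real.pi), mul_comm h]
  gcongr _ * Real.exp (_ * ?_)
  calc (k : ℝ) * w.im ≤ |(k : ℝ)| * |w.im| := (le_abs_self _).trans_eq (abs_mul _ _)
    _ ≤ |(k : ℝ)| * h := by gcongr

lemma summable_norm_fermiCoeff_mul_cexp (β : ℂ) {L w : ℂ} (hL : 0 < L.re)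
    (hw : |w.im| < Real.pi * L⁻¹.re) :
    Summable fun k : ℤ ↦ ‖fermiCoeff β L k * exp (-2 * (Real.pi : ℂ) * I * (k : ℂ) * w)‖ :=
  (summable_norm_fermiCoeff_mul_exp β hL hw).of_nonneg_of_le (fun _ ↦ norm_nonneg _)
    (norm_fermiCoeff_mul_exp_le β L le_rfl)

lemma fourier_fermiKernel {β L : ℂ} (hβ : 0 < β.re) (hβL : β.re < L.re) (n : ℤ) :
    FourierTransform.fourier (fun y : ℝ ↦ fermiKernel β L y) (n : ℝ) =
      L⁻¹ * fermiCoeff β L (-n) := by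
  have hmodulate (s : ℝ) : exp (((-2 * Real.pi * s * n : ℝ) : ℂ) * I) • fermiKernel β L s =
      fermiKernel (β - 2 * Real.pi * I * n) L s := by
    rw [fermiKernel, fermiKernel, smul_eq_mul, ← mul_div_assoc, ← exp_add]
    congr 2
    push_cast
    ring
  have harg : (Real.pi : ℂ) * (β / L) + 2 * I * ((-n : ℤ) : ℂ) * (Real.pi : ℂ) ^ 2 / L =
      Real.pi * (β - 2 * Real.pi * I * n) / L := by
    push_cast
    ring
  simp only [Real.fourier_real_eq_integral_exp_smul, hmodulate]
  rw [integral_fermiKernel (by simpa using hβ) (by simpa using hβL), fermiCoeff, harg]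
  ring

lemma isBigO_exp_neg_mul_abs_cocompact {a : ℝ} (ha : 0 < a) :
    (fun y : ℝ ↦ Real.exp (-(a * |y|))) =O[cocompact ℝ] fun y ↦ |y| ^ (-(2 : ℝ)) := by
  refine .of_bound (min 1 (a ^ 2 / 2))⁻¹ ?_
  filter_upwards [(tendsto_norm_cocompact_atTop (E := ℝ)).eventually_ge_atTop 1] with y hy
  have hy0 : 0 < y ^ 2 := by
    rw [← sq_abs]
    exact pow_pos (one_pos.trans_le hy) 2
  rw [Real.norm_of_nonneg (Real.exp_pos _).le, Real.norm_of_nonneg (by positivity),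
    Real.rpow_neg (abs_nonneg y), Real.rpow_two, sq_abs]
  refine (exp_neg_mul_abs_le ha y).trans ?_
  gcongr
  linarith

lemma tsum_fermiKernel_ofReal_add_intCast {β L : ℂ} (hβ : 0 < β.re) (hβL : β.re < L.re)
    (x : ℝ) :
    ∑' n : ℤ, fermiKernel β L (x + n) =
      L⁻¹ * ∑' k : ℤ, fermiCoeff β L k * exp (-2 * (Real.pi : ℂ) * I * (k : ℂ) * x) := by
  have hL : 0 < L.re := hβ.trans hβL
  have hH : 0 < Real.pi * L⁻¹.re := mul_pos Real.pi_pos (inv_re_pos hL)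
  obtain ⟨C, -, δ, hδ, hCδ⟩ := exists_norm_fermiKernel_le_of_strip hβ hβL hH
  have hcont : Continuous fun y : ℝ ↦ fermiKernel β L y :=
    continuous_fermiKernel_ofReal fun s ↦ one_add_exp_mul_ne_zero hL (by simpa using hH)
  have hdecay : (fun y : ℝ ↦ fermiKernel β L y) =O[cocompact ℝ] fun y ↦ |y| ^ (-(2 : ℝ)) :=
    (IsBigO.of_bound C (.of_forall fun y ↦ by
      simpa using hCδ y (by simp))).trans (isBigO_exp_neg_mul_abs_cocompact hδ)
  have hsum : Summable (fermiCoeff β L) :=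
    .of_norm (by simpa using summable_norm_fermiCoeff_mul_exp β hL hH)
  have hpoisson := Real.tsum_eq_tsum_fourier_of_rpow_decay_of_summable hcont one_lt_two hdecay
    (by
      simp only [fourier_fermiKernel hβ hβL]
      exact (hsum.comp_injective neg_injective).mul_left L⁻¹) x
  push_cast at hpoisson
  rw [hpoisson, ← tsum_mul_left, ← (Equiv.neg ℤ).tsum_eq]
  refine tsum_congr fun k ↦ ?_
  rw [Equiv.neg_apply, fourier_fermiKernel hβ hβL, neg_neg, fourier_coe_apply, mul_assoc]
  congr 3
  push_cast
  ring

lemma isOpen_rectangle (R h : ℝ) : IsOpen {z : ℂ | |z.re| < R ∧ |z.im| < h} :=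
  (isOpen_lt continuous_re.abs continuous_const).inter
    (isOpen_lt continuous_im.abs continuous_const)

lemma convex_rectangle (R h : ℝ) : Convex ℝ {z : ℂ | |z.re| < R ∧ |z.im| < h} := by
  simp only [abs_lt, ← Set.mem_Ioo]
  exact ((convex_Ioo (-R) R).linear_preimage reLm).inter
    ((convex_Ioo (-h) h).linear_preimage imLm)

lemma differentiableOn_tsum_fermiKernel {β L : ℂ} (hβ : 0 < β.re) (hβL : β.re < L.re) (R : ℝ)
    {h : ℝ} (hh : h < Real.pi * L⁻¹.re) :
    DifferentiableOn ℂ (fun z ↦ ∑' n : ℤ, fermiKernel β L (z + n))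
      {z : ℂ | |z.re| < R ∧ |z.im| < h} := by
  obtain ⟨u, hu, hle⟩ := exists_summable_norm_fermiKernel_add_intCast_le hβ hβL R hh
  refine differentiableOn_tsum_of_summable_norm hu (fun n z hz ↦ ?_) (isOpen_rectangle R h)
    fun n z hz ↦ hle z hz.1.le hz.2.le n
  have hne := one_add_exp_mul_ne_zero (ζ := z + n) (hβ.trans hβL) (by simpa using hz.2.trans hh)
  exact ((differentiableAt_fermiKernel_right hne).comp z
    (differentiableAt_id.add_const _)).differentiableWithinAt

lemma differentiableOn_tsum_fermiCoeff (β : ℂ) {L : ℂ} (hL : 0 < L.re) (R : ℝ) {h : ℝ}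
    (hh : h < Real.pi * L⁻¹.re) :
    DifferentiableOn ℂ
      (fun z ↦ ∑' k : ℤ, fermiCoeff β L k * exp (-2 * (Real.pi : ℂ) * I * (k : ℂ) * z))
      {z : ℂ | |z.re| < R ∧ |z.im| < h} :=
  differentiableOn_tsum_of_summable_norm (summable_norm_fermiCoeff_mul_exp β hL hh)
    (fun _ _ _ ↦ DifferentiableAt.differentiableWithinAt (by fun_prop)) (isOpen_rectangle R h)
    fun k _ hz ↦ norm_fermiCoeff_mul_exp_le β L hz.2.le k

theorem tsum_fermiKernel_add_intCast {β L w : ℂ} (hβ : 0 < β.re) (hβL : β.re < L.re)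
    (hw : |w.im| < Real.pi * L⁻¹.re) :
    ∑' n : ℤ, fermiKernel β L (w + n) =
      L⁻¹ * ∑' k : ℤ, fermiCoeff β L k * exp (-2 * (Real.pi : ℂ) * I * (k : ℂ) * w) := by
  obtain ⟨h, hwh, hh⟩ := exists_between hw
  have hopen := isOpen_rectangle (|w.re| + 1) h
  have hf := (differentiableOn_tsum_fermiKernel hβ hβL (|w.re| + 1) hh).analyticOnNhd hopen
  have hg := ((differentiableOn_tsum_fermiCoeff β (hβ.trans hβL) (|w.re| + 1) hh).const_mul
    L⁻¹).analyticOnNhd hopen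
  refine eqOn_of_eventually_ofReal_eq hf hg (convex_rectangle _ _).isPreconnected (x₀ := 0) ?_
    (.of_forall (tsum_fermiKernel_ofReal_add_intCast hβ hβL)) ⟨lt_add_one _, hwh⟩
  simpa using ⟨by positivity, (abs_nonneg _).trans_lt hwh⟩

end Poisson

/-! ### A three-term relation between unilateral and bilateral `q`-series -/

section QBinomialRatio

/-- The quotient `(b s;q)_∞ / (a s;q)_∞`, viewed as a function of `s`: by the `q`-binomial theorem
it is the generating function of the `qBinomTerm a b q n`. -/
def qPIRatio (a b q s : ℂ) : ℂ := qPI (b * s) q / qPI (a * s) q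

variable {a q s : ℂ}

lemma norm_mul_lt_one_of_le (ha : ‖a‖ < 1) (hs : ‖s‖ ≤ 1) : ‖a * s‖ < 1 := by
  rw [norm_mul]
  exact mul_lt_one_of_nonneg_of_lt_one_left (norm_nonneg a) ha hs

lemma one_sub_mul_qPIRatio (b : ℂ) (has : ‖a * s‖ < 1) (hq : ‖q‖ < 1) :
    (1 - a * s) * qPIRatio a b q s = (1 - b * s) * qPIRatio a b q (s * q) := by
  have hne := qPI_ne_zero has hq
  rw [qPI_eq_one_sub_mul (a * s) hq] at hne
  have hfactor := left_ne_zero_of_mul hne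
  rw [qPIRatio, qPIRatio, qPI_eq_one_sub_mul (a * s) hq, qPI_eq_one_sub_mul (b * s) hq,
    ← mul_assoc a, ← mul_assoc b]
  field_simp

lemma hasSum_qPIRatio (b : ℂ) (has : ‖a * s‖ < 1) (hq : ‖q‖ < 1) :
    HasSum (fun n ↦ qBinomTerm a b q n * s ^ n) (qPIRatio a b q s) := by
  have hsum := (summable_norm_qBinomTerm (b * s) has hq).of_norm.hasSum
  rw [tsum_qBinomTerm (b * s) has hq] at hsum
  exact hsum.congr_fun fun n ↦ (qBinomTerm_mul_mul a b q s n).symm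

lemma exists_norm_qPIRatio_le (b : ℂ) (ha : ‖a‖ < 1) (hq : ‖q‖ < 1) :
    ∃ M, ∀ s, ‖s‖ ≤ 1 → ‖qPIRatio a b q s‖ ≤ M := by
  refine ⟨∑' n, ‖qBinomTerm a b q n‖, fun s hs ↦ ?_⟩
  rw [← (hasSum_qPIRatio b (norm_mul_lt_one_of_le ha hs) hq).tsum_eq]
  refine tsum_of_norm_bounded (summable_norm_qBinomTerm b ha hq).hasSum fun n ↦ ?_
  rw [norm_mul, norm_pow]
  exact mul_le_of_le_one_right (norm_nonneg _) (pow_le_one₀ (norm_nonneg s) hs)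

lemma summable_natCast_mul_norm_qBinomTerm (b : ℂ) (ha : ‖a‖ < 1) (hq : ‖q‖ < 1) :
    Summable fun n : ℕ ↦ n * ‖qBinomTerm a b q n‖ := by
  obtain ⟨R, hR, haR⟩ : ∃ R : ℝ, 1 < R ∧ ‖a‖ * R < 1 := by
    have hlim : Tendsto (fun R : ℝ ↦ ‖a‖ * R) (𝓝[>] 1) (𝓝 (‖a‖ * 1)) :=
      (continuous_const_mul ‖a‖).continuousWithinAt
    have hmem : ∀ᶠ R : ℝ in 𝓝[>] 1, 1 < R := self_mem_nhdsWithin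
    exact (hmem.and (hlim.eventually_lt_const (by rwa [mul_one]))).exists
  have hnorm : ‖(R : ℂ)‖ = R := by rw [norm_real, Real.norm_of_nonneg (by linarith)]
  have hmajor := (summable_norm_qBinomTerm (x := a * R) (b * R)
    (by rwa [norm_mul, hnorm]) hq).mul_left (R - 1)⁻¹
  refine .of_nonneg_of_le (fun n ↦ by positivity) (fun n ↦ ?_) hmajor
  have hbernoulli := one_add_mul_sub_le_pow (by linarith : -1 ≤ R) n
  rw [qBinomTerm_mul_mul, norm_mul, norm_pow, hnorm, inv_mul_eq_div, le_div_iff₀ (by linarith)]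
  nlinarith [norm_nonneg (qBinomTerm a b q n)]

lemma norm_pow_sub_pow_le {s t : ℂ} (hs : ‖s‖ ≤ 1) (ht : ‖t‖ ≤ 1) (n : ℕ) :
    ‖s ^ n - t ^ n‖ ≤ n * ‖s - t‖ := by
  rw [← geom_sum₂_mul, norm_mul]
  gcongr
  refine (norm_sum_le_of_le (f := fun i ↦ s ^ i * t ^ (n - 1 - i)) (n := fun _ ↦ 1) _
    fun i _ ↦ ?_).trans (by simp)
  rw [norm_mul, norm_pow, norm_pow]
  exact mul_le_one₀ (pow_le_one₀ (norm_nonneg s) hs) (by positivity)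
    (pow_le_one₀ (norm_nonneg t) ht)

lemma exists_norm_qPIRatio_sub_le (b : ℂ) (ha : ‖a‖ < 1) (hq : ‖q‖ < 1) :
    ∃ M, ∀ s t, ‖s‖ ≤ 1 → ‖t‖ ≤ 1 →
      ‖qPIRatio a b q s - qPIRatio a b q t‖ ≤ M * ‖s - t‖ := by
  refine ⟨∑' n : ℕ, n * ‖qBinomTerm a b q n‖, fun s t hs ht ↦ ?_⟩
  have hdiff := (hasSum_qPIRatio b (norm_mul_lt_one_of_le ha hs) hq).sub
    (hasSum_qPIRatio b (norm_mul_lt_one_of_le ha ht) hq)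
  rw [← hdiff.tsum_eq]
  refine tsum_of_norm_bounded
    ((summable_natCast_mul_norm_qBinomTerm b ha hq).hasSum.mul_right ‖s - t‖) fun n ↦ ?_
  rw [← mul_sub, norm_mul]
  calc ‖qBinomTerm a b q n‖ * ‖s ^ n - t ^ n‖
      ≤ ‖qBinomTerm a b q n‖ * (n * ‖s - t‖) := by gcongr; exact norm_pow_sub_pow_le hs ht n
    _ = n * ‖qBinomTerm a b q n‖ * ‖s - t‖ := by ring

lemma qBinomTerm_one_left_eq (ha : ‖a‖ < 1) (hq : ‖q‖ < 1) (n : ℕ) :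
    qBinomTerm 1 a q n = qPI a q / qPI q q * qPIRatio a q q (q ^ n) := by
  have hPa := qPI_ne_zero ha hq
  have hPq := qPI_ne_zero hq hq
  rw [qPI_eq_qPF_mul _ hq n] at hPa hPq
  obtain ⟨-, hPa⟩ := mul_ne_zero_iff.mp hPa
  obtain ⟨hFq, hPq⟩ := mul_ne_zero_iff.mp hPq
  rw [qBinomTerm_one_left, qPIRatio, qPI_eq_qPF_mul a hq n, qPI_eq_qPF_mul q hq n]
  rw [div_mul_div_comm, div_eq_div_iff hFq (by simp_all)]
  ring

end QBinomialRatio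

section ThreeTerm

/-- The unilateral sum `∑_{n ≥ 0} (a;q)_n / (q;q)_n * w^n / (q^n - y)`. -/
def unilateralSum (a w q y : ℂ) : ℂ := ∑' n : ℕ, qBinomTerm w (a * w) q n / (q ^ n - y)

/-- The bilateral sum `∑_{n ∈ ℤ} w^n / (q^n - y)`. -/
def bilateralSum (w q y : ℂ) : ℂ := ∑' n : ℤ, w ^ n / (q ^ n - y)

/-- The `r`-th term `(a⁻¹v⁻¹q;q)_r / (v⁻¹q;q)_r * z^r` of the regular series. -/
def regularTerm (a v q z : ℂ) (r : ℕ) : ℂ :=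
  qPF (a⁻¹ * v⁻¹ * q) q r / qPF (v⁻¹ * q) q r * z ^ r

variable {a v q w y z : ℂ}

lemma ne_zero_of_one_lt_norm (hv : 1 < ‖v‖) : v ≠ 0 := by
  rintro rfl
  rw [norm_zero] at hv
  linarith

lemma norm_inv_lt_one (hv : 1 < ‖v‖) : ‖v⁻¹‖ < 1 := by
  rw [norm_inv]
  exact inv_lt_one_of_one_lt₀ hv

lemma one_sub_inv_mul_pow_ne_zero (hv : 1 < ‖v‖) (hq : ‖q‖ < 1) (n : ℕ) :
    1 - v⁻¹ * q ^ n ≠ 0 :=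
  one_sub_ne_zero_of_norm_lt_one (norm_mul_pow_lt_one (norm_inv_lt_one hv) hq n)

lemma regularTerm_zero (a v q z : ℂ) : regularTerm a v q z 0 = 1 := by
  simp [regularTerm, qPF_zero]

lemma regularTerm_succ (hv : 1 < ‖v‖) (hq : ‖q‖ < 1) (z : ℂ) (r : ℕ) :
    (1 - v⁻¹ * q ^ (r + 1)) * regularTerm a v q z (r + 1)
      = z * (1 - a⁻¹ * v⁻¹ * q ^ (r + 1)) * regularTerm a v q z r := by
  have hne := one_sub_inv_mul_pow_ne_zero hv hq (r + 1)
  have hnum : a⁻¹ * v⁻¹ * q * q ^ r = a⁻¹ * v⁻¹ * q ^ (r + 1) := by ring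
  have hden : v⁻¹ * q * q ^ r = v⁻¹ * q ^ (r + 1) := by ring
  rw [regularTerm, regularTerm, qPF_succ, qPF_succ, hnum, hden, pow_succ z, mul_div_mul_comm]
  linear_combination (qPF (a⁻¹ * v⁻¹ * q) q r / qPF (v⁻¹ * q) q r * z ^ r * z) *
    mul_div_cancel₀ (1 - a⁻¹ * v⁻¹ * q ^ (r + 1)) hne

lemma summable_norm_regularTerm (hv : 1 < ‖v‖) (hq : ‖q‖ < 1) (hz : ‖z‖ < 1) :
    Summable fun r ↦ ‖regularTerm a v q z r‖ := by
  obtain ⟨ρ, hzρ, hρ⟩ := exists_between hz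
  have hpow : Tendsto (fun r : ℕ ↦ q ^ (r + 1)) atTop (𝓝 0) :=
    (tendsto_add_atTop_iff_nat 1).mpr (tendsto_pow_atTop_nhds_zero_of_norm_lt_one hq)
  have hratio : Tendsto (fun r : ℕ ↦ z * (1 - a⁻¹ * v⁻¹ * q ^ (r + 1)) / (1 - v⁻¹ * q ^ (r + 1)))
      atTop (𝓝 z) := by
    simpa [Pi.div_def] using (((hpow.const_mul (a⁻¹ * v⁻¹)).const_sub 1).const_mul z).div
      ((hpow.const_mul v⁻¹).const_sub 1) (by simp)
  refine summable_of_ratio_norm_eventually_le hρ ?_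
  filter_upwards [hratio.norm.eventually_lt_const hzρ] with r hr
  have hstep : regularTerm a v q z (r + 1) = z * (1 - a⁻¹ * v⁻¹ * q ^ (r + 1)) /
      (1 - v⁻¹ * q ^ (r + 1)) * regularTerm a v q z r := by
    rw [div_mul_eq_mul_div, eq_div_iff (one_sub_inv_mul_pow_ne_zero hv hq _), mul_comm,
      regularTerm_succ hv hq]
  rw [norm_norm, norm_norm, hstep, norm_mul]
  gcongr

lemma regularTerm_mul (a v q z c : ℂ) (r : ℕ) :
    regularTerm a v q (z * c) r = regularTerm a v q z r * c ^ r := by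
  rw [regularTerm, regularTerm, mul_pow, ← mul_assoc]

lemma one_sub_mul_tsum_regularTerm (ha0 : a ≠ 0) (hv : 1 < ‖v‖) (hq : ‖q‖ < 1)
    (hay : ‖a * y‖ < 1) :
    (1 - q * y) * ∑' r, regularTerm a v q (a * y * q) r
      = v * (1 - a * y) * (∑' r, regularTerm a v q (a * y) r) + (1 - v) := by
  have hv0 := ne_zero_of_one_lt_norm hv
  have hayq : ‖a * y * q‖ < 1 := norm_mul_lt_one_of_le hay hq.le
  have hs := (summable_norm_regularTerm (a := a) hv hq hay).of_norm
  have hsq := (summable_norm_regularTerm (a := a) hv hq hayq).of_norm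
  have hdiff : (∑' r, regularTerm a v q (a * y * q) r) - v * ∑' r, regularTerm a v q (a * y) r
      = (1 - v) + ∑' r, (q * y * regularTerm a v q (a * y * q) r
        - v * (a * y) * regularTerm a v q (a * y) r) := by
    rw [← tsum_mul_left, ← hsq.tsum_sub (hs.mul_left v),
      (hsq.sub (hs.mul_left v)).tsum_eq_zero_add]
    simp only [regularTerm_zero, mul_one]
    congr 1
    refine tsum_congr fun r ↦ ?_
    have hstep := regularTerm_succ (a := a) hv hq (a * y) r
    simp only [regularTerm_mul _ _ _ (a * y) q]
    linear_combination (-v) * hstep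
      - q ^ (r + 1) * regularTerm a v q (a * y) (r + 1) * mul_inv_cancel₀ hv0
      + y * q ^ (r + 1) * regularTerm a v q (a * y) r *
        (a * a⁻¹ * mul_inv_cancel₀ hv0 + mul_inv_cancel₀ ha0)
  rw [(hsq.mul_left _).tsum_sub (hs.mul_left _), tsum_mul_left, tsum_mul_left] at hdiff
  linear_combination hdiff

lemma bilateralSum_mul_right (hv0 : v ≠ 0) (hq0 : q ≠ 0) (y : ℂ) :
    bilateralSum (v * q) q (y * q) = v * bilateralSum (v * q) q y := by
  rw [bilateralSum, bilateralSum, ← (Equiv.addRight (1 : ℤ)).tsum_eq, ← tsum_mul_left]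
  refine tsum_congr fun n ↦ ?_
  rw [Equiv.coe_addRight, zpow_add_one₀ (mul_ne_zero hv0 hq0), zpow_add_one₀ hq0, ← sub_mul,
    mul_left_comm, ← mul_assoc, mul_div_mul_right _ _ hq0, mul_div_assoc]

lemma pow_ne_mul_pow (hq0 : q ≠ 0) (hq : ‖q‖ < 1) (hy : ‖y‖ < 1) (hpole : ∀ n : ℕ, q ^ n ≠ y)
    (N n : ℕ) : q ^ n ≠ y * q ^ N := by
  rcases lt_or_ge n N with hnN | hNn
  · obtain ⟨k, rfl⟩ := Nat.exists_eq_add_of_lt hnN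
    have hne := one_sub_ne_zero_of_norm_lt_one (norm_mul_pow_lt_one hy hq (k + 1))
    rw [← sub_ne_zero, show q ^ n - y * q ^ (n + k + 1) = q ^ n * (1 - y * q ^ (k + 1)) by ring]
    exact mul_ne_zero (pow_ne_zero n hq0) hne
  · obtain ⟨k, rfl⟩ := Nat.exists_eq_add_of_le' hNn
    rw [pow_add]
    exact (mul_left_injective₀ (pow_ne_zero N hq0)).ne (hpole k)

lemma summable_mul_inv_pow_sub {f : ℕ → ℂ} (hf : Summable fun n ↦ ‖f n‖) (hq : ‖q‖ < 1)
    (hy0 : y ≠ 0) : Summable fun n ↦ f n / (q ^ n - y) := by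
  have hlim : Tendsto (fun n : ℕ ↦ (q ^ n - y)⁻¹) atTop (𝓝 (0 - y)⁻¹) :=
    ((tendsto_pow_atTop_nhds_zero_of_norm_lt_one hq).sub_const y).inv₀ (by simpa using hy0)
  obtain ⟨C, hC⟩ := (Metric.isBounded_range_of_tendsto _ hlim).exists_norm_le
  refine .of_norm_bounded (hf.mul_right C) fun n ↦ ?_
  rw [div_eq_mul_inv, norm_mul]
  gcongr
  exact hC _ ⟨n, rfl⟩

lemma one_sub_mul_unilateralSum (hq0 : q ≠ 0) (hq : ‖q‖ < 1) (hvq : ‖v * q‖ < 1) (hy : ‖y‖ < 1)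
    (hy0 : y ≠ 0) (hpole : ∀ n : ℕ, q ^ n ≠ y) :
    (1 - q * y) * unilateralSum a (v * q) q (y * q)
      = v * (1 - a * y) * unilateralSum a (v * q) q y
        + (1 - a * v) * ∑' n, qBinomTerm (v * q) (a * (v * q)) q n := by
  set d := qBinomTerm (v * q) (a * (v * q)) q with hd
  have hnorm : Summable fun n ↦ ‖d n‖ := summable_norm_qBinomTerm _ hvq hq
  have hs := summable_mul_inv_pow_sub hnorm hq hy0
  have hsq := summable_mul_inv_pow_sub hnorm hq (mul_ne_zero hy0 hq0)
  have hpoleq (n : ℕ) : q ^ n ≠ y * q := by simpa using pow_ne_mul_pow hq0 hq hy hpole 1 n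
  have hleft (n : ℕ) : (1 - q ^ n) * d n / (q ^ n - y * q)
      = (1 - y * q) * (d n / (q ^ n - y * q)) - d n := by
    have hne := sub_ne_zero.mpr (hpoleq n)
    field_simp
    ring
  have hright (n : ℕ) : (1 - q ^ (n + 1)) * d (n + 1) / (q ^ (n + 1) - y * q)
      = v * (1 - a * y) * (d n / (q ^ n - y)) - a * v * d n := by
    have hne := sub_ne_zero.mpr (hpole n)
    rw [hd, qBinomTerm_succ _ _ hq, ← hd, pow_succ, ← sub_mul]
    field_simp
    ring
  have hshift : ∑' n, (1 - q ^ n) * d n / (q ^ n - y * q)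
      = ∑' n, (1 - q ^ (n + 1)) * d (n + 1) / (q ^ (n + 1) - y * q) := by
    rw [Summable.tsum_eq_zero_add]
    · simp
    · simpa only [hleft] using (hsq.mul_left _).sub hnorm.of_norm
  rw [tsum_congr hleft, tsum_congr hright, (hsq.mul_left _).tsum_sub hnorm.of_norm,
    (hs.mul_left _).tsum_sub (hnorm.of_norm.mul_left _), tsum_mul_left, tsum_mul_left,
    tsum_mul_left] at hshift
  rw [unilateralSum, unilateralSum, ← hd]
  linear_combination hshift

lemma zpow_neg_div_eq (hq0 : q ≠ 0) (v y : ℂ) (n : ℕ) :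
    (v * q) ^ (-((n : ℤ) + 1)) / (q ^ (-((n : ℤ) + 1)) - y)
      = v⁻¹ ^ (n + 1) / (1 - y * q ^ (n + 1)) := by
  rw [zpow_neg, zpow_neg, ← Nat.cast_add_one, zpow_natCast, zpow_natCast, mul_pow, inv_pow]
  have hqn : q ^ (n + 1) ≠ 0 := pow_ne_zero _ hq0
  rw [mul_inv, ← div_eq_mul_inv, div_div, mul_sub, mul_inv_cancel₀ hqn, mul_comm _ y]

lemma norm_inv_pow_div_le (hv : 1 < ‖v‖) (hq : ‖q‖ < 1) (hy : ‖y‖ ≤ 1) (n : ℕ) :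
    ‖v⁻¹ ^ (n + 1) / (1 - y * q ^ (n + 1))‖ ≤ ‖v⁻¹‖ ^ n / (1 - ‖q‖) := by
  have hdenom : 1 - ‖q‖ ≤ ‖1 - y * q ^ (n + 1)‖ := by
    have htri := norm_sub_norm_le 1 (y * q ^ (n + 1))
    have hsmall : ‖y * q ^ (n + 1)‖ ≤ ‖q‖ := by
      rw [pow_succ', ← mul_assoc, mul_right_comm, mul_comm, norm_mul]
      refine mul_le_of_le_one_right (norm_nonneg q) ?_
      rw [norm_mul, norm_pow]
      exact mul_le_one₀ hy (by positivity) (pow_le_one₀ (norm_nonneg q) hq.le)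
    rw [norm_one] at htri
    linarith
  rw [norm_div, norm_pow, pow_succ]
  refine div_le_div₀ (by positivity) ?_ (by linarith) hdenom
  exact mul_le_of_le_one_right (by positivity) (norm_inv_lt_one hv).le

lemma summable_bilateralSum (hq0 : q ≠ 0) (hq : ‖q‖ < 1) (hv : 1 < ‖v‖) (hvq : ‖v * q‖ < 1)
    (hy : ‖y‖ ≤ 1) (hy0 : y ≠ 0) : Summable fun n : ℤ ↦ (v * q) ^ n / (q ^ n - y) := by
  refine .of_nat_of_neg_add_one ?_ ?_
  · simp only [zpow_natCast]
    refine summable_mul_inv_pow_sub ?_ hq hy0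
    simpa only [norm_pow] using summable_geometric_of_lt_one (norm_nonneg _) hvq
  · simp only [zpow_neg_div_eq hq0]
    exact .of_norm_bounded ((summable_geometric_of_lt_one (norm_nonneg _)
      (norm_inv_lt_one hv)).div_const _) (norm_inv_pow_div_le hv hq hy)

lemma unilateralSum_sub_eq (hq0 : q ≠ 0) (hq : ‖q‖ < 1) (ha : ‖a‖ < 1) (hv : 1 < ‖v‖)
    (hvq : ‖v * q‖ < 1) (hy : ‖y‖ ≤ 1) (hy0 : y ≠ 0) :
    unilateralSum a (v * q) q y
        - qPI a q / qPI q q * (qPIRatio a q q y * bilateralSum (v * q) q y)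
      = qPI a q / qPI q q *
        ((∑' n : ℕ, (v * q) ^ n * ((qPIRatio a q q (q ^ n) - qPIRatio a q q y) / (q ^ n - y)))
          - qPIRatio a q q y * ∑' n : ℕ, v⁻¹ ^ (n + 1) / (1 - y * q ^ (n + 1))) := by
  have hbil := summable_bilateralSum hq0 hq hv hvq hy hy0
  have hnonneg : Summable fun n : ℕ ↦ (v * q) ^ n / (q ^ n - y) := by
    simpa only [zpow_natCast, Function.comp_def] using hbil.comp_injective Nat.cast_injective
  have hneg : Summable fun n : ℕ ↦ v⁻¹ ^ (n + 1) / (1 - y * q ^ (n + 1)) :=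
    .of_norm_bounded ((summable_geometric_of_lt_one (norm_nonneg _)
      (norm_inv_lt_one hv)).div_const _) (norm_inv_pow_div_le hv hq hy)
  have hsplit : bilateralSum (v * q) q y = (∑' n : ℕ, (v * q) ^ n / (q ^ n - y))
      + ∑' n : ℕ, v⁻¹ ^ (n + 1) / (1 - y * q ^ (n + 1)) := by
    rw [bilateralSum, tsum_of_nat_of_neg_add_one (by simpa only [zpow_natCast] using hnonneg)
      (by simpa only [zpow_neg_div_eq hq0] using hneg)]
    simp only [zpow_natCast, zpow_neg_div_eq hq0]
  have huni := summable_mul_inv_pow_sub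
    (summable_norm_qBinomTerm (a * (v * q)) hvq hq) hq hy0
  have hpoint : (∑' n : ℕ, qBinomTerm (v * q) (a * (v * q)) q n / (q ^ n - y))
        - qPI a q / qPI q q * qPIRatio a q q y * ∑' n : ℕ, (v * q) ^ n / (q ^ n - y)
      = qPI a q / qPI q q *
        ∑' n : ℕ, (v * q) ^ n * ((qPIRatio a q q (q ^ n) - qPIRatio a q q y) / (q ^ n - y)) := by
    rw [← tsum_mul_left, ← tsum_mul_left, ← huni.tsum_sub (hnonneg.mul_left _)]
    refine tsum_congr fun n ↦ ?_
    have hterm := qBinomTerm_mul_mul 1 a q (v * q) n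
    rw [one_mul, qBinomTerm_one_left_eq ha hq] at hterm
    rw [hterm]
    ring
  rw [hsplit, unilateralSum]
  linear_combination hpoint

lemma exists_norm_unilateralSum_sub_le (hq0 : q ≠ 0) (hq : ‖q‖ < 1) (ha : ‖a‖ < 1)
    (hv : 1 < ‖v‖) (hvq : ‖v * q‖ < 1) :
    ∃ B, ∀ y, ‖y‖ ≤ 1 → y ≠ 0 → (∀ n : ℕ, q ^ n ≠ y) →
      ‖unilateralSum a (v * q) q y
        - qPI a q / qPI q q * (qPIRatio a q q y * bilateralSum (v * q) q y)‖ ≤ B := by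
  obtain ⟨L, hL⟩ := exists_norm_qPIRatio_sub_le q ha hq
  obtain ⟨M, hM⟩ := exists_norm_qPIRatio_le q ha hq
  refine ⟨‖qPI a q / qPI q q‖ * ((∑' n : ℕ, ‖v * q‖ ^ n * L)
    + M * ∑' n : ℕ, ‖v⁻¹‖ ^ n / (1 - ‖q‖)), fun y hy hy0 hpole ↦ ?_⟩
  rw [unilateralSum_sub_eq hq0 hq ha hv hvq hy hy0, norm_mul]
  gcongr
  refine (norm_sub_le _ _).trans (add_le_add ?_ ?_)
  · refine tsum_of_norm_bounded
      ((summable_geometric_of_lt_one (norm_nonneg _) hvq).mul_right L).hasSum fun n ↦ ?_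
    have hqn : ‖q ^ n‖ ≤ 1 := by
      rw [norm_pow]
      exact pow_le_one₀ (norm_nonneg q) hq.le
    rw [norm_mul, norm_pow, norm_div]
    gcongr
    rw [div_le_iff₀ (norm_pos_iff.mpr (sub_ne_zero.mpr (hpole n)))]
    exact hL _ _ hqn hy
  · rw [norm_mul]
    refine mul_le_mul (hM y hy) ?_ (norm_nonneg _) ((norm_nonneg _).trans (hM y hy))
    exact tsum_of_norm_bounded ((summable_geometric_of_lt_one (norm_nonneg _)
      (norm_inv_lt_one hv)).div_const _).hasSum (norm_inv_pow_div_le hv hq hy)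

/-- The difference between the unilateral sum and its claimed expression by the bilateral sum and
the regular series. It satisfies a homogeneous first-order `q`-difference equation in `y`. -/
def threeTermDefect (a v q y : ℂ) : ℂ :=
  unilateralSum a (v * q) q y
    - qPI a q / qPI q q * (qPIRatio a q q y * bilateralSum (v * q) q y)
    - qPI (a * v) q / qPI v q * ∑' r, regularTerm a v q (a * y) r

lemma one_sub_mul_threeTermDefect (hq0 : q ≠ 0) (hq : ‖q‖ < 1) (ha0 : a ≠ 0) (ha : ‖a‖ < 1)
    (hv : 1 < ‖v‖) (hvq : ‖v * q‖ < 1) (hy : ‖y‖ < 1) (hy0 : y ≠ 0)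
    (hpole : ∀ n : ℕ, q ^ n ≠ y) :
    (1 - q * y) * threeTermDefect a v q (y * q)
      = v * (1 - a * y) * threeTermDefect a v q y := by
  have hay : ‖a * y‖ < 1 := norm_mul_lt_one_of_le ha hy.le
  have hv1 : 1 - v ≠ 0 := by
    rw [sub_ne_zero]
    rintro rfl
    exact hv.ne' norm_one
  have hconst : qPI (a * v) q / qPI v q * (1 - v)
      = (1 - a * v) * ∑' n, qBinomTerm (v * q) (a * (v * q)) q n := by
    have hvq0 := qPI_ne_zero hvq hq
    rw [tsum_qBinomTerm _ hvq hq, qPI_eq_one_sub_mul v hq, qPI_eq_one_sub_mul (a * v) hq,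
      ← mul_assoc a]
    field_simp
  have huni := one_sub_mul_unilateralSum (a := a) hq0 hq hvq hy hy0 hpole
  have hbil := bilateralSum_mul_right (ne_zero_of_one_lt_norm hv) hq0 y
  have hratio := one_sub_mul_qPIRatio q hay hq
  have hreg := one_sub_mul_tsum_regularTerm ha0 hv hq hay
  rw [mul_assoc a y q] at hreg
  rw [threeTermDefect, threeTermDefect, hbil]
  linear_combination huni + qPI a q / qPI q q * (v * bilateralSum (v * q) q y) * hratio
    - qPI (a * v) q / qPI v q * hreg - hconst

lemma qPF_mul_threeTermDefect (hq0 : q ≠ 0) (hq : ‖q‖ < 1) (ha0 : a ≠ 0) (ha : ‖a‖ < 1)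
    (hv : 1 < ‖v‖) (hvq : ‖v * q‖ < 1) (hy : ‖y‖ < 1) (hy0 : y ≠ 0)
    (hpole : ∀ n : ℕ, q ^ n ≠ y) (N : ℕ) :
    qPF (q * y) q N * threeTermDefect a v q (y * q ^ N)
      = v ^ N * qPF (a * y) q N * threeTermDefect a v q y := by
  induction N with
  | zero => simp [qPF_zero]
  | succ N ih =>
    have hstep := one_sub_mul_threeTermDefect hq0 hq ha0 ha hv hvq
      (norm_mul_pow_lt_one hy hq N) (mul_ne_zero hy0 (pow_ne_zero N hq0))
      (pow_ne_mul_pow hq0 hq hy hpole N)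
    rw [qPF_succ, qPF_succ, pow_succ q, ← mul_assoc y]
    linear_combination v * (1 - a * y * q ^ N) * ih + qPF (q * y) q N * hstep

lemma exists_norm_threeTermDefect_le (hq0 : q ≠ 0) (hq : ‖q‖ < 1) (ha : ‖a‖ < 1) (hv : 1 < ‖v‖)
    (hvq : ‖v * q‖ < 1) (hy : ‖y‖ < 1) (hy0 : y ≠ 0) (hpole : ∀ n : ℕ, q ^ n ≠ y) :
    ∃ B, ∀ N : ℕ, ‖threeTermDefect a v q (y * q ^ N)‖ ≤ B := by
  obtain ⟨B, hB⟩ := exists_norm_unilateralSum_sub_le hq0 hq ha hv hvq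
  have hreg := summable_norm_regularTerm (a := a) hv hq (norm_mul_lt_one_of_le ha hy.le)
  refine ⟨B + ‖qPI (a * v) q / qPI v q‖ * ∑' r, ‖regularTerm a v q (a * y) r‖, fun N ↦ ?_⟩
  refine (norm_sub_le _ _).trans (add_le_add (hB _ (norm_mul_pow_lt_one hy hq N).le
    (mul_ne_zero hy0 (pow_ne_zero N hq0)) (pow_ne_mul_pow hq0 hq hy hpole N)) ?_)
  rw [norm_mul, ← mul_assoc]
  gcongr
  refine tsum_of_norm_bounded hreg.hasSum fun r ↦ ?_
  rw [regularTerm_mul, norm_mul, norm_pow, norm_pow]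
  exact mul_le_of_le_one_right (norm_nonneg _)
    (pow_le_one₀ (by positivity) (pow_le_one₀ (norm_nonneg q) hq.le))

lemma threeTermDefect_eq_zero (hq0 : q ≠ 0) (hq : ‖q‖ < 1) (ha0 : a ≠ 0) (ha : ‖a‖ < 1)
    (hv : 1 < ‖v‖) (hvq : ‖v * q‖ < 1) (hy : ‖y‖ < 1) (hy0 : y ≠ 0)
    (hpole : ∀ n : ℕ, q ^ n ≠ y) : threeTermDefect a v q y = 0 := by
  -- Along the orbit `y * q ^ N` a nonzero defect would grow like `v ^ N`, whereas it is bounded.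
  obtain ⟨B, hB⟩ := exists_norm_threeTermDefect_le hq0 hq ha hv hvq hy hy0 hpole
  have hay : ‖a * y‖ < 1 := norm_mul_lt_one_of_le ha hy.le
  have hvanish : Tendsto (fun N ↦ v⁻¹ ^ N * qPF (q * y) q N) atTop (𝓝 0) := by
    simpa using (tendsto_pow_atTop_nhds_zero_of_norm_lt_one (norm_inv_lt_one hv)).mul
      (tendsto_qPF_qPI (q * y) hq)
  have hscaled := hvanish.zero_mul_isBoundedUnder_le (isBoundedUnder_of ⟨B, hB⟩)
  have hlim : Tendsto (fun N ↦ qPF (a * y) q N * threeTermDefect a v q y) atTop (𝓝 0) := by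
    refine hscaled.congr fun N ↦ ?_
    rw [mul_assoc, qPF_mul_threeTermDefect hq0 hq ha0 ha hv hvq hy hy0 hpole, ← mul_assoc,
      ← mul_assoc, ← mul_pow, inv_mul_cancel₀ (ne_zero_of_one_lt_norm hv), one_pow, one_mul]
  have hprod := tendsto_nhds_unique ((tendsto_qPF_qPI _ hq).mul_const _) hlim
  exact (mul_eq_zero.mp hprod).resolve_left (qPI_ne_zero hay hq)

theorem unilateralSum_eq (hq0 : q ≠ 0) (hq : ‖q‖ < 1) (ha0 : a ≠ 0) (ha : ‖a‖ < 1)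
    (hv : 1 < ‖v‖) (hvq : ‖v * q‖ < 1) (hy : ‖y‖ < 1) (hy0 : y ≠ 0)
    (hpole : ∀ n : ℕ, q ^ n ≠ y) :
    unilateralSum a (v * q) q y
      = qPI a q / qPI q q * (qPIRatio a q q y * bilateralSum (v * q) q y)
        + qPI (a * v) q / qPI v q * ∑' r, regularTerm a v q (a * y) r := by
  have hdefect := threeTermDefect_eq_zero hq0 hq ha0 ha hv hvq hy hy0 hpole
  rw [threeTermDefect] at hdefect
  linear_combination hdefect

end ThreeTerm

/-! ### The sector with vertex `1/2` -/

section Sector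

lemma abs_arg_neg {z : ℂ} (hz : z ≠ 0) : |arg (-z)| = Real.pi - |arg z| := by
  rw [← angle_one_left hz, ← angle_one_left (neg_ne_zero.mpr hz),
    InnerProductGeometry.angle_neg_right]

lemma abs_arg_one_sub_two_mul {q : ℂ} (hq : q ≠ 1 / 2) :
    |arg (1 - 2 * q)| = Real.pi - |arg (q - 1 / 2)| := by
  rw [← abs_arg_neg (sub_ne_zero.mpr hq), ← arg_real_mul (-(q - 1 / 2)) two_pos]
  congr 2
  push_cast
  ring

lemma abs_im_div_lt {τ L : ℂ} {c θ : ℝ} (hL : 0 < L.re) (hτ : |τ.im| ≤ c - θ)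
    (hτL : |τ.re * L.im| < θ * L.re) : |(τ / L).im| < c * L⁻¹.re := by
  have hnormSq : 0 < normSq L := normSq_pos.mpr fun h ↦ by simp [h] at hL
  have him : (τ / L).im = (τ.im * L.re - τ.re * L.im) / normSq L := by
    rw [div_im]
    ring
  rw [him, inv_re, abs_div, abs_of_pos hnormSq, ← mul_div_assoc]
  gcongr
  calc |τ.im * L.re - τ.re * L.im| ≤ |τ.im * L.re| + |τ.re * L.im| := abs_sub _ _
    _ = |τ.im| * L.re + |τ.re * L.im| := by rw [abs_mul, abs_of_pos hL]
    _ < (c - θ) * L.re + θ * L.re :=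
      add_lt_add_of_le_of_lt (mul_le_mul_of_nonneg_right hτ hL.le) hτL
    _ = c * L.re := by ring

lemma differentiableAt_log_one_div_half : DifferentiableAt ℂ (fun q : ℂ ↦ log (1 / q)) (1 / 2) :=
  ((differentiableAt_const 1).fun_div differentiableAt_id (by norm_num)).clog
    (by left; norm_num)

lemma log_one_div_half : log (1 / (1 / 2 : ℂ)) = Real.log 2 := by
  rw [one_div_one_div, ← ofReal_ofNat, ofReal_log zero_le_two]

lemma im_log_one_div_isBigO :
    (fun q : ℂ ↦ (log (1 / q)).im) =O[𝓝 (1 / 2)] fun q ↦ ‖1 - 2 * q‖ := by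
  have hlog := differentiableAt_log_one_div_half.isBigO_sub
  rw [log_one_div_half] at hlog
  have him : (fun q : ℂ ↦ (log (1 / q)).im)
      =O[𝓝 (1 / 2)] fun q ↦ log (1 / q) - (Real.log 2 : ℝ) := by
    refine .of_bound 1 (.of_forall fun q ↦ ?_)
    rw [one_mul, Real.norm_eq_abs]
    simpa only [sub_im, ofReal_im, sub_zero] using abs_im_le_norm (log (1 / q) - (Real.log 2 : ℝ))
  refine (him.trans hlog).trans (.of_bound 1 (.of_forall fun q ↦ ?_))
  rw [one_mul, norm_norm, show 1 - 2 * q = -2 * (q - 1 / 2) by ring, norm_mul, norm_neg,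
    Complex.norm_ofNat]
  linarith [norm_nonneg (q - 1 / 2)]

lemma eventually_abs_log_mul_im_log_lt {θ : ℝ} (hθ : 0 < θ) : ∀ᶠ q : ℂ in 𝓝 (1 / 2),
    |Real.log ‖1 - 2 * q‖ * (log (1 / q)).im| < θ * (log (1 / q)).re := by
  have hnorm : Tendsto (fun q : ℂ ↦ Real.log ‖1 - 2 * q‖ * ‖1 - 2 * q‖) (𝓝 (1 / 2)) (𝓝 0) := by
    have hcont : Continuous fun q : ℂ ↦ Real.log ‖1 - 2 * q‖ * ‖1 - 2 * q‖ := by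
      simpa only [mul_comm, Function.comp_def] using Real.continuous_mul_log.comp
        (show Continuous fun q : ℂ ↦ ‖1 - 2 * q‖ by fun_prop)
    simpa using hcont.tendsto (1 / 2)
  have hleft := (((isBigO_refl (fun q : ℂ ↦ Real.log ‖1 - 2 * q‖) (𝓝 (1 / 2))).mul
    im_log_one_div_isBigO).trans_tendsto hnorm).abs
  have hright := (continuous_re.continuousAt.comp
    differentiableAt_log_one_div_half.continuousAt).tendsto.const_mul θ
  refine hleft.eventually_lt hright ?_
  rw [Function.comp_apply, log_one_div_half, ofReal_re, abs_zero]
  exact mul_pos hθ (Real.log_pos one_lt_two)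

lemma abs_im_log_div_log_lt {q : ℂ} {θ : ℝ} (hq : q ≠ 1 / 2) (harg : θ ≤ |arg (q - 1 / 2)|)
    (hL : 0 < (log (1 / q)).re)
    (hlog : |Real.log ‖1 - 2 * q‖ * (log (1 / q)).im| < θ * (log (1 / q)).re) :
    |(log (1 - 2 * q) / log (1 / q)).im| < Real.pi * (log (1 / q))⁻¹.re := by
  refine abs_im_div_lt (θ := θ) hL ?_ (by rwa [log_re])
  rw [log_im, abs_arg_one_sub_two_mul hq]
  linarith

end Sector

/-! ### Assembly at an admissible point -/

/-- The value `y = -t / q²`, `t = 1 - 2 * q`, of the parameter of the unilateral and bilateral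
sums. It is chosen so that `1 - 2 * q + q ^ (n + 2) = q ^ 2 * (q ^ n - y)`. -/
def yF (q : ℂ) : ℂ := -(1 - 2 * q) / q ^ 2

/-- The open conditions on `q`, valid near `1 / 2`, under which all the series of the decomposition
except the Fourier series converge. -/
structure IsAdmissible (q : ℂ) : Prop where
  re_pos : 0 < q.re
  norm_lt_one : ‖q‖ < 1
  one_lt_norm_vF : 1 < ‖vF q‖
  norm_vF_mul : ‖vF q * q‖ < 1
  norm_aF : ‖aF q‖ < 1
  norm_uF_mul : ‖uF q * q‖ < 1
  norm_yF : ‖yF q‖ < 1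

lemma eventually_isAdmissible : ∀ᶠ q in 𝓝 (1 / 2), IsAdmissible q := by
  have hone : (1 : ℂ) - 1 / 2 ≠ 0 := by norm_num
  have hre : ContinuousAt (fun q : ℂ ↦ q.re) (1 / 2) := continuous_re.continuousAt
  have hnorm : ContinuousAt (fun q : ℂ ↦ ‖q‖) (1 / 2) := continuous_norm.continuousAt
  have hu := (differentiableAt_uF hone).continuousAt
  have hv := (differentiableAt_vF hone).continuousAt
  have ha : ContinuousAt aF (1 / 2) := .div (by fun_prop) (by fun_prop) (by norm_num)
  have hy : ContinuousAt yF (1 / 2) := .div (by fun_prop) (by fun_prop) (by norm_num)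
  filter_upwards [hre.eventually_const_lt (u := 0) (by norm_num),
    hnorm.eventually_lt_const (u := 1) (by norm_num),
    hv.norm.eventually_const_lt (u := 1) (by norm_num [vF]),
    (hv.mul continuousAt_id).norm.eventually_lt_const (u := 1) (by norm_num [vF]),
    ha.norm.eventually_lt_const (u := 1) (by norm_num [aF]),
    (hu.mul continuousAt_id).norm.eventually_lt_const (u := 1) (by norm_num [uF]),
    hy.norm.eventually_lt_const (u := 1) (by norm_num [yF])]
    with q hre hnorm hv hvq ha huq hy
  exact ⟨hre, hnorm, hv, hvq, ha, huq, hy⟩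

namespace IsAdmissible

variable {q : ℂ}

lemma ne_zero (h : IsAdmissible q) : q ≠ 0 := by
  rintro rfl
  exact lt_irrefl _ h.re_pos

lemma one_sub_ne_zero (h : IsAdmissible q) : 1 - q ≠ 0 :=
  one_sub_ne_zero_of_norm_lt_one h.norm_lt_one

lemma vF_ne_zero (h : IsAdmissible q) : vF q ≠ 0 :=
  ne_zero_of_one_lt_norm h.one_lt_norm_vF

lemma one_sub_add_sq_ne_zero (h : IsAdmissible q) : 1 - q + q ^ 2 ≠ 0 :=
  (div_ne_zero_iff.mp h.vF_ne_zero).1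

lemma aF_ne_zero (h : IsAdmissible q) : aF q ≠ 0 :=
  div_ne_zero (pow_ne_zero 2 h.ne_zero) h.one_sub_add_sq_ne_zero

lemma aF_mul_vF (h : IsAdmissible q) : aF q * vF q = uF q * q := by
  have hne := h.one_sub_add_sq_ne_zero
  rw [aF, vF, uF]
  field_simp

lemma log_one_div (h : IsAdmissible q) : log (1 / q) = -log q := by
  rw [one_div, log_inv]
  exact fun harg ↦ (arg_eq_pi_iff.mp harg).1.not_gt h.re_pos

lemma exp_log_one_div (h : IsAdmissible q) : exp (log (1 / q)) = q⁻¹ := by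
  rw [h.log_one_div, exp_neg, exp_log h.ne_zero]

lemma re_log_vF_pos (h : IsAdmissible q) : 0 < (log (vF q)).re := by
  rw [log_re]
  exact Real.log_pos h.one_lt_norm_vF

lemma re_log_vF_lt (h : IsAdmissible q) : (log (vF q)).re < (log (1 / q)).re := by
  rw [log_re, log_re]
  refine Real.log_lt_log (norm_pos_iff.mpr h.vF_ne_zero) ?_
  rw [norm_div, norm_one, lt_div_iff₀ (norm_pos_iff.mpr h.ne_zero), ← norm_mul]
  exact h.norm_vF_mul

lemma re_log_one_div_pos (h : IsAdmissible q) : 0 < (log (1 / q)).re :=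
  h.re_log_vF_pos.trans h.re_log_vF_lt

lemma log_one_div_ne_zero (h : IsAdmissible q) : log (1 / q) ≠ 0 := fun hzero ↦
  h.re_log_one_div_pos.ne' (by rw [hzero, zero_re])

lemma exp_log_one_div_mul (h : IsAdmissible q) (ht : 1 - 2 * q ≠ 0) (n : ℤ) :
    exp (log (1 / q) * (log (1 - 2 * q) / log (1 / q) + n)) = (1 - 2 * q) / q ^ n := by
  rw [mul_add, mul_div_cancel₀ _ h.log_one_div_ne_zero, exp_add, exp_log ht, mul_comm _ (n : ℂ),
    exp_int_mul, h.exp_log_one_div, inv_zpow, div_eq_mul_inv]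

lemma zpow_add_one_sub_two_mul_ne_zero (h : IsAdmissible q) (ht : 1 - 2 * q ≠ 0)
    (hstrip : |(log (1 - 2 * q) / log (1 / q)).im| < Real.pi * (log (1 / q))⁻¹.re) (n : ℤ) :
    q ^ n + (1 - 2 * q) ≠ 0 := by
  have hne := one_add_exp_mul_ne_zero (ζ := log (1 - 2 * q) / log (1 / q) + n)
    h.re_log_one_div_pos (by simpa using hstrip)
  rw [h.exp_log_one_div_mul ht, one_add_div (zpow_ne_zero n h.ne_zero)] at hne
  exact (div_ne_zero_iff.mp hne).1

lemma fermiKernel_eq (h : IsAdmissible q) (ht : 1 - 2 * q ≠ 0) (n : ℤ) :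
    fermiKernel (log (vF q)) (log (1 / q)) (log (1 - 2 * q) / log (1 / q) + n)
      = exp (gammaC q * log (1 - 2 * q)) * ((vF q * q) ^ n / (q ^ n + (1 - 2 * q))) := by
  have hnum : exp (log (vF q) * (log (1 - 2 * q) / log (1 / q) + n))
      = exp (gammaC q * log (1 - 2 * q)) * vF q ^ n := by
    rw [mul_add, exp_add, mul_comm _ (n : ℂ), exp_int_mul, exp_log h.vF_ne_zero, gammaC]
    congr 2
    ring
  have hqn := zpow_ne_zero n h.ne_zero
  rw [fermiKernel, hnum, h.exp_log_one_div_mul ht, one_add_div hqn, mul_zpow, div_div_eq_mul_div,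
    mul_assoc, mul_div_assoc]

lemma pow_sub_yF (h : IsAdmissible q) (n : ℤ) :
    q ^ n - yF q = (q ^ (n + 2) + (1 - 2 * q)) / q ^ 2 := by
  have hq := h.ne_zero
  rw [zpow_add₀ hq, zpow_ofNat, yF]
  field_simp
  ring

lemma bilateralSum_eq (h : IsAdmissible q) (ht : 1 - 2 * q ≠ 0)
    (hstrip : |(log (1 - 2 * q) / log (1 / q)).im| < Real.pi * (log (1 / q))⁻¹.re) :
    bilateralSum (vF q * q) q (yF q)
      = q ^ 2 / (vF q * q) ^ 2 * exp (-gammaC q * log (1 - 2 * q)) *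
        ((log (1 / q))⁻¹ * PiC q (log (1 - 2 * q) / log (1 / q))) := by
  have hpoisson : (log (1 / q))⁻¹ * PiC q (log (1 - 2 * q) / log (1 / q)) = _ :=
    (tsum_fermiKernel_add_intCast h.re_log_vF_pos h.re_log_vF_lt hstrip).symm
  have hq := h.ne_zero
  have hv := h.vF_ne_zero
  rw [hpoisson, ← (Equiv.addRight (2 : ℤ)).tsum_eq, ← tsum_mul_left, bilateralSum]
  refine tsum_congr fun n ↦ ?_
  rw [Equiv.coe_addRight, h.fermiKernel_eq ht, h.pow_sub_yF, neg_mul, exp_neg,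
    zpow_add₀ (mul_ne_zero hv hq), zpow_ofNat]
  field_simp

lemma VtermC_eq_regularTerm (q : ℂ) (r : ℕ) :
    VtermC q r = regularTerm (aF q) (vF q) q (aF q * yF q) r := by
  rw [VtermC, regularTerm, yF]
  ring_nf

lemma vF_mul_cpow (h : IsAdmissible q) :
    vF q * q ^ (3 * gammaC q - 2) = 1 / (vF q * q) ^ 2 := by
  have hv := h.vF_ne_zero
  have hL := h.log_one_div_ne_zero
  have hexponent : log q * (3 * gammaC q - 2) = 2 * log (1 / q) - 3 * log (vF q) := by
    rw [gammaC, ← neg_eq_iff_eq_neg.mpr h.log_one_div]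
    field_simp
    ring
  rw [cpow_def_of_ne_zero h.ne_zero, hexponent, exp_sub, ← Nat.cast_ofNat, exp_nat_mul,
    ← Nat.cast_ofNat (n := 3), exp_nat_mul, h.exp_log_one_div, exp_log hv]
  field_simp

lemma UfunC_eq (h : IsAdmissible q) :
    UfunC q = 1 / (vF q * q) ^ 2 / log (1 / q) * qPIRatio (aF q) q q (yF q) := by
  have hnum : -(q⁻¹ * (1 - 2 * q)) = q * yF q := by
    have hq := h.ne_zero
    rw [yF]
    field_simp
  have hden : -(aF q * q⁻¹ ^ 2 * (1 - 2 * q)) = aF q * yF q := by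
    rw [yF]
    ring
  rw [UfunC, h.vF_mul_cpow, hnum, hden, qPIRatio]

lemma tsum_eq_unilateralSum (h : IsAdmissible q) :
    ∑' n, qBinomTerm (vF q * q) (uF q * q ^ 2) q n * (1 / (1 - 2 * q + q ^ (n + 2)))
      = 1 / q ^ 2 * unilateralSum (aF q) (vF q * q) q (yF q) := by
  have hparam : aF q * (vF q * q) = uF q * q ^ 2 := by
    rw [← mul_assoc, h.aF_mul_vF]
    ring
  have hq := h.ne_zero
  rw [unilateralSum, ← tsum_mul_left, hparam]
  refine tsum_congr fun n ↦ ?_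
  have hdenom := h.pow_sub_yF n
  norm_cast at hdenom
  rw [hdenom, add_comm (1 - 2 * q)]
  field_simp

lemma qPI_vF (h : IsAdmissible q) :
    qPI (vF q) q = -(q ^ 2 / (1 - q)) * qPI (vF q * q) q := by
  rw [qPI_eq_one_sub_mul (vF q) h.norm_lt_one, vF_eq_one_add h.one_sub_ne_zero, uF]
  ring

lemma PAcont_eq (h : IsAdmissible q) :
    PAcont q = CF q - AF q * (qPI (vF q) q / qPI (aF q * vF q) q) *
      unilateralSum (aF q) (vF q * q) q (yF q) := by
  rw [PAcont, h.tsum_eq_unilateralSum, tsum_qBinomTerm _ h.norm_uF_mul h.norm_lt_one, h.aF_mul_vF,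
    h.qPI_vF]
  field_simp
  ring

lemma qPI_vF_ne_zero (h : IsAdmissible q) : qPI (vF q) q ≠ 0 := by
  rw [h.qPI_vF]
  exact mul_ne_zero (neg_ne_zero.mpr (div_ne_zero (pow_ne_zero 2 h.ne_zero) h.one_sub_ne_zero))
    (qPI_ne_zero h.norm_vF_mul h.norm_lt_one)

lemma unilateralSum_yF_eq (h : IsAdmissible q) (ht : 1 - 2 * q ≠ 0)
    (hstrip : |(log (1 - 2 * q) / log (1 / q)).im| < Real.pi * (log (1 / q))⁻¹.re) :
    unilateralSum (aF q) (vF q * q) q (yF q)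
      = qPI (aF q) q / qPI q q * (qPIRatio (aF q) q q (yF q) * bilateralSum (vF q * q) q (yF q))
        + qPI (aF q * vF q) q / qPI (vF q) q * ∑' r, VtermC q r := by
  have hq := h.ne_zero
  have hy0 : yF q ≠ 0 := div_ne_zero (neg_ne_zero.mpr ht) (pow_ne_zero 2 hq)
  have hpole (n : ℕ) : q ^ n ≠ yF q := by
    rw [← sub_ne_zero, ← zpow_natCast, h.pow_sub_yF]
    exact div_ne_zero (h.zpow_add_one_sub_two_mul_ne_zero ht hstrip _) (pow_ne_zero 2 hq)
  simp only [VtermC_eq_regularTerm]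
  exact unilateralSum_eq hq h.norm_lt_one h.aF_ne_zero h.norm_aF h.one_lt_norm_vF h.norm_vF_mul
    h.norm_yF hy0 hpole

lemma VfunC_eq (h : IsAdmissible q) :
    VfunC q = -(qPI q q / qPI (aF q) q) * (1 / (1 - q) ^ 2) +
      1 / q ^ 2 * (qPI q q * qPI (aF q * vF q) q / (qPI (aF q) q * qPI (vF q) q)) *
        ∑' r, VtermC q r := by
  have hq := h.ne_zero
  have hsq : 1 + (1 - 2 * q) / q ^ 2 = (1 - q) ^ 2 / q ^ 2 := by
    field_simp
    ring
  rw [VfunC, hsq, div_div_div_cancel_right₀ (pow_ne_zero 2 hq)]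

lemma summable_norm_VtermC (h : IsAdmissible q) : Summable fun r ↦ ‖VtermC q r‖ := by
  simp only [VtermC_eq_regularTerm]
  exact summable_norm_regularTerm h.one_lt_norm_vF h.norm_lt_one
    (norm_mul_lt_one_of_le h.norm_aF h.norm_yF.le)

lemma PAcont_eq_singular_add_regular (h : IsAdmissible q) (ht : 1 - 2 * q ≠ 0)
    (hstrip : |(log (1 - 2 * q) / log (1 / q)).im| < Real.pi * (log (1 / q))⁻¹.re) :
    PAcont q = DF q - q ^ 2 * AF q *
      (qPI (aF q) q * qPI (vF q) q / (qPI q q * qPI (aF q * vF q) q)) *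
      (exp (-gammaC q * log (1 - 2 * q)) * PiC q (log (1 - 2 * q) / log (1 / q)) * UfunC q
        + VfunC q) := by
  have hq := h.ne_zero
  have hone := h.one_sub_ne_zero
  have hPa := qPI_ne_zero h.norm_aF h.norm_lt_one
  have hPv := h.qPI_vF_ne_zero
  have hPq := qPI_ne_zero h.norm_lt_one h.norm_lt_one
  have hPav : qPI (aF q * vF q) q ≠ 0 := by
    rw [h.aF_mul_vF]
    exact qPI_ne_zero h.norm_uF_mul h.norm_lt_one
  rw [h.PAcont_eq, h.unilateralSum_yF_eq ht hstrip, h.bilateralSum_eq ht hstrip, DF, h.VfunC_eq,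
    h.UfunC_eq]
  field_simp
  ring

end IsAdmissible

theorem PA_singular_regular_decomposition_sector_general :
    ∃ f : ℂ → ℂ,
      AnalyticOnNhd ℂ f slitDisc ∧
      (∀ z : ℂ, ‖z‖ < 1 / 10 → f z = PAseries z) ∧
      ∀ θ₀ : ℝ, 0 < θ₀ →
        ∃ r₀ : ℝ, 0 < r₀ ∧
          ∀ q : ℂ, q ≠ 1 / 2 → ‖q - 1 / 2‖ < r₀ → θ₀ < |arg (q - 1 / 2)| →
            (Summable fun k : ℤ ↦ ‖pcoefC q k *
              exp (-2 * (Real.pi : ℂ) * I * (k : ℂ) * (log (1 - 2 * q) / log (1 / q)))‖) ∧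
            (Summable fun r : ℕ ↦ ‖VtermC q r‖) ∧
            f q = DF q - q ^ 2 * AF q *
              (qPI (aF q) q * qPI (vF q) q / (qPI q q * qPI (aF q * vF q) q)) *
              (exp (-gammaC q * log (1 - 2 * q)) *
                PiC q (log (1 - 2 * q) / log (1 / q)) * UfunC q + VfunC q) := by
  refine ⟨PAcont, analyticOnNhd_PAcont, fun _ ↦ PAcont_eq_PAseries_of_norm_lt, fun θ₀ hθ₀ ↦ ?_⟩
  obtain ⟨r₀, hr₀, hnear⟩ := Metric.eventually_nhds_iff.mp
    (eventually_isAdmissible.and (eventually_abs_log_mul_im_log_lt hθ₀))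
  refine ⟨r₀, hr₀, fun q hq hr harg ↦ ?_⟩
  obtain ⟨h, hlog⟩ := hnear (y := q) (by rwa [dist_eq_norm])
  have ht : 1 - 2 * q ≠ 0 := fun hzero ↦ hq (by linear_combination (-1 / 2) * hzero)
  have hstrip := abs_im_log_div_log_lt hq harg.le h.re_log_one_div_pos hlog
  exact ⟨summable_norm_fermiCoeff_mul_cexp (log (vF q)) h.re_log_one_div_pos hstrip,
    h.summable_norm_VtermC, h.PAcont_eq_singular_add_regular ht hstrip⟩

/-- In a sector anchored at `1/2` of angle `θ₀ < π/2`, the analytic continuation of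
`PA(q)` admits the singular-plus-regular representation, all series converging
absolutely. -/
theorem PA_singular_regular_decomposition_sector :
    ∃ f : ℂ → ℂ,
      AnalyticOnNhd ℂ f slitDisc ∧
      (∀ z : ℂ, ‖z‖ < 1 / 10 → f z = PAseries z) ∧
      ∃ θ₀ : ℝ, 0 < θ₀ ∧ θ₀ < Real.pi / 2 ∧
        ∃ r₀ : ℝ, 0 < r₀ ∧
          ∀ q : ℂ, q ≠ 1 / 2 → ‖q - 1 / 2‖ < r₀ → θ₀ < |Complex.arg (q - 1 / 2)| →
            Summable (fun k : ℤ => ‖pcoefC q k *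
              Complex.exp (-2 * (Real.pi : ℂ) * Complex.I * (k : ℂ) *
                (Complex.log (1 - 2 * q) / Complex.log (1 / q)))‖) ∧
            Summable (fun r : ℕ => ‖VtermC q r‖) ∧
            f q =
              DF q - q ^ 2 * AF q *
                (qPI (aF q) q * qPI (vF q) q / (qPI q q * qPI (aF q * vF q) q)) *
                (Complex.exp (-(gammaC q) * Complex.log (1 - 2 * q)) *
                    PiC q (Complex.log (1 - 2 * q) / Complex.log (1 / q)) * UfunC q +
                  VfunC q) := by
  obtain ⟨f, hanalytic, hseries, hsector⟩ := PA_singular_regular_decomposition_sector_general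
  exact ⟨f, hanalytic, hseries, 1, one_pos, by linarith [Real.pi_gt_three], hsector 1 one_pos⟩
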